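/- arXiv:1005.0937 — 3 statements merged into one kernel-verified Lean document; each statement's English description precedes it below -/
import Mathlib

section
/- Let E, F be Banach spaces, A ⊆ E a ξ_E-dense subset, and T : A → F a coarse (M,L)-quasi isometry whose image is ξ_F-dense in F. Then there exists a bijection T̃ : E → F which is a coarse (M, (4M²+3)L + 4ξ_F + 2Mξ_E)-quasi isometry and satisfies ‖T̃x − Tx‖ ≤ (2M²+2)L + 2ξ_F + Mξ_E for all x ∈ A. -/
/-!
For `x : E` call `z : F` admissible if it lies near `T a` for some `a ∈ A` near `x`, with `a = x`
if `x ∈ A`; any map that picks admissible values is a coarse quasi isometry close to `T`. A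
cardinality argument (`F` is equipotent with `ℕ → F`, and `x ↦ (T (aₙₓ))ₙ`, with `aₙₓ ∈ A` near
`n • x`, is injective) gives `#E = #F`. Hence, when every `x` has a ball of admissible `z` and every
`z` is admissible for a ball of `x`, transfinite recursion produces injections `E → F` and `F → E`
with graph in the admissible pairs, and the Schröder–Bernstein construction glues them to a
bijection.

If `L + ξF > 0` there is slack, and these balls exist. If `L = ξF = 0`, the inverse of `T` on `A` is
already an injection `F → E`, so only an injection `E → F` is needed. For `M > 1` its values are
taken from small balls around a radial contraction of `T a`, which keeps the upper Lipschitz bound.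
For `M = 1` the inverse of `T` is an isometry of `F` onto a coarsely dense set, and Figiel's theorem
forces this set to be all of `E`.
-/

open Filter Function Metric Set Topology
open scoped Cardinal

universe u v

section Cardinality

/-- Transfinite recursion along a well-order of `α` whose initial segments are smaller than `α`. -/
theorem exists_injective_forall_rel {α : Type u} {β : Type v} {R : α → β → Prop}
    (hR : ∀ x, Nonempty (α ↪ {z // R x z})) : ∃ f : α → β, Injective f ∧ ∀ x, R x (f x) := by
  obtain ⟨r, hr, hord⟩ := Cardinal.exists_ord_eq α
  have exists_fresh (x : α) (g : ∀ y, r y x → β) : ∃ z, R x z ∧ ∀ y hy, g y hy ≠ z := by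
    by_contra! hused
    obtain ⟨e⟩ := hR x
    choose y hy hgy using fun a ↦ hused (e a) (e a).2
    have y_injective : Injective fun a ↦ (⟨y a, hy a⟩ : {y // r y x}) := fun a b hab ↦
      e.injective <| Subtype.ext <| by
        rw [← hgy a, ← hgy b]
        congr 1
        exact congrArg Subtype.val hab
    exact (Cardinal.mk_le_of_injective y_injective).not_gt (Cardinal.card_typein_lt x hord)
  choose next hnext hfresh using exists_fresh
  let f : α → β := hr.wf.fix next
  have hf (x : α) : f x = next x fun y _ ↦ f y := hr.wf.fix_eq next x
  have f_ne {x y : α} (hxy : r x y) : f x ≠ f y := by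
    rw [hf y]
    exact hfresh y (fun y _ ↦ f y) x hxy
  refine ⟨f, fun x y hxy ↦ ?_, fun x ↦ hf x ▸ hnext x _⟩
  rcases trichotomous_of r x y with hlt | heq | hgt
  · exact absurd hxy (f_ne hlt)
  · exact heq
  · exact absurd hxy.symm (f_ne hgt)

theorem eq_of_forall_nat_mul_dist_le {X : Type*} [MetricSpace X] {x y : X} {C : ℝ}
    (h : ∀ n : ℕ, n * dist x y ≤ C) : x = y := by
  by_contra hxy
  obtain ⟨n, hn⟩ := exists_nat_gt (C / dist x y)
  exact (h n).not_gt ((div_lt_iff₀ (dist_pos.2 hxy)).1 hn)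

theorem injective_apply_nat_smul {E α : Type*} [NormedAddCommGroup E] [NormedSpace ℝ E]
    {f : E → α} {C : ℝ} (hf : ∀ x y, f x = f y → dist x y ≤ C) :
    Injective fun (x : E) (n : ℕ) ↦ f ((n : ℝ) • x) := fun x y hxy ↦
  eq_of_forall_nat_mul_dist_le fun n ↦ by
    simpa only [dist_smul₀, Real.norm_natCast] using hf _ _ (congrFun hxy n)

theorem exists_nontrivial_separated_dense_span (F : Type*) [NormedAddCommGroup F] [NormedSpace ℝ F]
    [Nontrivial F] :
    ∃ S : Set F, S.Nontrivial ∧ S ⊆ closedBall 0 1 ∧ (S.Pairwise fun x y ↦ 1 / 2 ≤ dist x y) ∧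
      Dense (Submodule.span ℝ S : Set F) := by
  obtain ⟨v, hv⟩ := exists_norm_eq F zero_le_one
  let P : Set (Set F) := {S | S ⊆ closedBall 0 1 ∧ S.Pairwise fun x y ↦ 1 / 2 ≤ dist x y}
  have pairwise_insert {S : Set F} {x : F} :
      ((insert x S).Pairwise fun x y ↦ 1 / 2 ≤ dist x y) ↔
        (S.Pairwise fun x y ↦ 1 / 2 ≤ dist x y) ∧ ∀ y ∈ S, x ≠ y → 1 / 2 ≤ dist x y :=
    have : Std.Symm fun x y : F ↦ 1 / 2 ≤ dist x y := ⟨fun x y h ↦ by rwa [dist_comm]⟩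
    pairwise_insert_of_symm
  have pair_mem : {v, 0} ∈ P := by
    refine ⟨by simp [insert_subset_iff, hv], pairwise_insert.2 ⟨pairwise_singleton _ _, ?_⟩⟩
    rintro _ rfl -
    norm_num [hv]
  obtain ⟨S, hvS, hS⟩ := zorn_subset_nonempty P
    (fun c hc hchain _ ↦ ⟨⋃₀ c, ⟨sUnion_subset fun s hs ↦ (hc hs).1,
      (pairwise_sUnion hchain.directedOn).2 fun s hs ↦ (hc hs).2⟩, fun _ ↦ subset_sUnion_of_mem⟩)
    _ pair_mem
  let K := (Submodule.span ℝ S).topologicalClosure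
  have hSK : S ⊆ K := Submodule.subset_span.trans (Submodule.le_topologicalClosure _)
  refine ⟨S, ⟨v, hvS (by simp), 0, hvS (by simp), norm_ne_zero_iff.1 (by simp [hv])⟩,
    hS.prop.1, hS.prop.2, fun x ↦ ?_⟩
  by_contra hx
  obtain ⟨y, hyK, hy_norm, hy⟩ := riesz_lemma_of_lt_one (F := K)
    (Submodule.isClosed_topologicalClosure _) ⟨x, hx⟩ one_half_lt_one
  have insert_mem : insert y S ∈ P :=
    ⟨insert_subset (by simp [hy_norm]) hS.prop.1, pairwise_insert.2
      ⟨hS.prop.2, fun z hz _ ↦ (hy z (hSK hz)).trans_eq (dist_eq_norm y z).symm⟩⟩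
  exact hyK (hSK (hS.le_of_ge insert_mem (subset_insert y S) (mem_insert y S)))

variable {F : Type u} [NormedAddCommGroup F] [NormedSpace ℝ F]

theorem tsum_pow_smul_eq_add {r : ℝ} {x : ℕ → F} (hx : Summable fun k ↦ r ^ k • x k) :
    ∑' k, r ^ k • x k = x 0 + r • ∑' k, r ^ k • x (k + 1) := by
  rw [hx.tsum_eq_zero_add, ← tsum_const_smul'']
  simp only [pow_zero, one_smul, smul_smul, pow_succ']

theorem injective_tsum_geometric_smul [CompleteSpace F] {S : Set F} (hS : S ⊆ closedBall 0 1)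
    (hsep : S.Pairwise fun x y ↦ 1 / 2 ≤ dist x y) :
    Injective fun s : ℕ → S ↦ ∑' k, (1 / 8 : ℝ) ^ k • (s k : F) := by
  set f : (ℕ → S) → F := fun s ↦ ∑' k, (1 / 8 : ℝ) ^ k • (s k : F)
  have geometric : HasSum (fun k ↦ (1 / 8 : ℝ) ^ k) (8 / 7) := by
    convert hasSum_geometric_of_lt_one (r := (1 / 8 : ℝ)) (by norm_num) (by norm_num) using 1
    norm_num
  have norm_term_le (s : ℕ → S) (k : ℕ) : ‖(1 / 8 : ℝ) ^ k • (s k : F)‖ ≤ (1 / 8 : ℝ) ^ k := by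
    rw [norm_smul, Real.norm_of_nonneg (by positivity)]
    exact mul_le_of_le_one_right (by positivity) (mem_closedBall_zero_iff.1 (hS (s k).2))
  have summable (s : ℕ → S) : Summable fun k ↦ (1 / 8 : ℝ) ^ k • (s k : F) :=
    .of_norm_bounded geometric.summable (norm_term_le s)
  have norm_f_le (s : ℕ → S) : ‖f s‖ ≤ 8 / 7 := tsum_of_norm_bounded geometric (norm_term_le s)
  have f_eq (s : ℕ → S) : f s = s 0 + (1 / 8 : ℝ) • f fun k ↦ s (k + 1) :=
    tsum_pow_smul_eq_add (summable s)
  have head_eq {s t : ℕ → S} (h : f s = f t) : s 0 = t 0 := by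
    by_contra hne
    have hdist : dist (s 0 : F) (t 0) =
        1 / 8 * ‖(f fun k ↦ t (k + 1)) - f fun k ↦ s (k + 1)‖ := by
      rw [f_eq s, f_eq t] at h
      rw [dist_eq_norm, sub_eq_sub_iff_add_eq_add.2 (h.trans (add_comm _ _)), ← smul_sub,
        norm_smul, Real.norm_of_nonneg (by norm_num)]
    linarith [hsep (s 0).2 (t 0).2 (Subtype.coe_injective.ne hne), norm_f_le fun k ↦ t (k + 1),
      norm_f_le fun k ↦ s (k + 1), norm_sub_le (f fun k ↦ t (k + 1)) (f fun k ↦ s (k + 1))]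
  have tail_eq {s t : ℕ → S} (h : f s = f t) :
      (f fun k ↦ s (k + 1)) = f fun k ↦ t (k + 1) := by
    have h0 := head_eq h
    rw [f_eq s, f_eq t, h0] at h
    exact smul_right_injective F (by norm_num : (1 / 8 : ℝ) ≠ 0) (add_left_cancel h)
  intro s t h
  funext k
  induction k generalizing s t with
  | zero => exact head_eq h
  | succ _ ih => exact ih (tail_eq h)

theorem lift_mk_span_le {R : Type v} {M : Type u} [Semiring R] [Infinite R] [AddCommMonoid M]
    [Module R M] {S : Set M} (hS : S.Nonempty) :
    Cardinal.lift.{v} #(Submodule.span R S) ≤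
      max (Cardinal.lift.{v} #S) (Cardinal.lift.{u} #R) := by
  have := hS.to_subtype
  have span_eq : (Submodule.span R S : Set M) =
      range (Finsupp.linearCombination R (Subtype.val : S → M)) := by
    rw [← LinearMap.coe_range, Finsupp.range_linearCombination, Subtype.range_coe]
  have mk_range_le :=
    Cardinal.mk_range_le_lift (f := Finsupp.linearCombination R (Subtype.val : S → M))
  rw [← span_eq] at mk_range_le
  rw [← Cardinal.mk_finsupp_lift_of_infinite']
  rwa [Cardinal.lift_umax.{u, v}, Cardinal.lift_id'.{u, v}] at mk_range_le

theorem mk_le_power_aleph0_of_dense {S : Set F} (hS : Dense S) : #F ≤ #S ^ ℵ₀ := by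
  choose f hfS hf using fun x ↦ hS.exists_dist_lt x one_pos
  let g (x : F) : S := ⟨f x, hfS x⟩
  have g_fibre (x y : F) (hxy : g x = g y) : dist x y ≤ 1 + 1 := by
    have hfxy : f x = f y := congrArg Subtype.val hxy
    exact (dist_triangle_right x y (f x)).trans (add_le_add (hf x).le (hfxy ▸ (hf y).le))
  simpa only [Cardinal.mk_arrow, Cardinal.mk_nat, Cardinal.lift_id, Cardinal.lift_uzero,
    Cardinal.lift_aleph0] using Cardinal.mk_le_of_injective (injective_apply_nat_smul g_fibre)

theorem mk_power_aleph0_eq_of_completeSpace [CompleteSpace F] : #F ^ ℵ₀ = #F := by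
  rcases subsingleton_or_nontrivial F with hF | hF
  · simp [Cardinal.mk_eq_one]
  obtain ⟨S, hS_nontrivial, hS_ball, hS_sep, hS_dense⟩ := exists_nontrivial_separated_dense_span F
  have power_le : #S ^ ℵ₀ ≤ #F := by
    simpa only [Cardinal.mk_arrow, Cardinal.mk_nat, Cardinal.lift_id, Cardinal.lift_uzero,
      Cardinal.lift_aleph0] using
      Cardinal.mk_le_of_injective (injective_tsum_geometric_smul hS_ball hS_sep)
  have two_le : 2 ≤ #S :=
    Cardinal.two_le_iff_one_lt.2 (Cardinal.one_lt_iff_nontrivial.2 hS_nontrivial.coe_sort)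
  have mk_span_le : #(Submodule.span ℝ S) ≤ #S ^ ℵ₀ := by
    have mk_span_le_max : #(Submodule.span ℝ S) ≤ max #S 𝔠 := by
      simpa only [Cardinal.lift_uzero, Cardinal.mk_real, Cardinal.lift_continuum] using
        lift_mk_span_le (R := ℝ) hS_nontrivial.nonempty
    refine mk_span_le_max.trans (max_le (Cardinal.self_le_power _ Cardinal.one_le_aleph0) ?_)
    rw [← Cardinal.two_power_aleph0]
    exact Cardinal.power_le_power_right two_le
  refine le_antisymm ?_ (Cardinal.self_le_power _ Cardinal.one_le_aleph0)
  calc #F ^ ℵ₀ ≤ (#(Submodule.span ℝ S) ^ ℵ₀) ^ ℵ₀ :=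
        Cardinal.power_le_power_right (mk_le_power_aleph0_of_dense hS_dense)
    _ ≤ ((#S ^ ℵ₀) ^ ℵ₀) ^ ℵ₀ :=
        Cardinal.power_le_power_right (Cardinal.power_le_power_right mk_span_le)
    _ = #S ^ ℵ₀ := by simp only [← Cardinal.power_mul, Cardinal.aleph0_mul_aleph0]
    _ ≤ #F := power_le

end Cardinality

section Coarse

variable {X Y : Type*}

/-- `A` is `ξ`-dense: every point of the ambient space lies within distance `ξ` of `A`. -/
def IsCoarselyDense [PseudoMetricSpace X] (ξ : ℝ) (A : Set X) : Prop :=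
  ∀ x, ∃ a ∈ A, dist x a ≤ ξ

/-- `T` is a coarse `(M, L)`-quasi isometry on the set `A`. The map is total, but only its
restriction to `A` is constrained. -/
structure IsCoarseQuasiIsometryOn [PseudoMetricSpace X] [PseudoMetricSpace Y] (M L : ℝ)
    (T : X → Y) (A : Set X) : Prop where
  le_dist : ∀ x ∈ A, ∀ y ∈ A, 1 / M * dist x y - L ≤ dist (T x) (T y)
  dist_le : ∀ x ∈ A, ∀ y ∈ A, dist (T x) (T y) ≤ M * dist x y + L

/-- `a` is an admissible substitute for `x` in the `ξ`-dense set `A`: it lies within `ξ` of `x`,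
and a point of `A` may only be replaced by itself. -/
structure IsAnchor [PseudoMetricSpace X] (A : Set X) (ξ : ℝ) (x a : X) : Prop where
  mem : a ∈ A
  dist_le : dist x a ≤ ξ
  eq_of_mem : x ∈ A → a = x

theorem IsCoarselyDense.nonneg [PseudoMetricSpace X] [Nonempty X] {ξ : ℝ} {A : Set X}
    (hA : IsCoarselyDense ξ A) : 0 ≤ ξ := by
  obtain ⟨_, -, h⟩ := hA (Classical.arbitrary X)
  exact dist_nonneg.trans h

theorem IsCoarselyDense.nonempty [PseudoMetricSpace X] [Nonempty X] {ξ : ℝ} {A : Set X}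
    (hA : IsCoarselyDense ξ A) : A.Nonempty := by
  obtain ⟨a, ha, -⟩ := hA (Classical.arbitrary X)
  exact ⟨a, ha⟩

theorem IsCoarselyDense.eq_univ [MetricSpace X] {A : Set X} (hA : IsCoarselyDense 0 A) :
    A = univ := by
  refine eq_univ_of_forall fun x ↦ ?_
  obtain ⟨a, ha, h⟩ := hA x
  rwa [dist_le_zero.1 h]

theorem isAnchor_self [PseudoMetricSpace X] {A : Set X} {ξ : ℝ} (hξ : 0 ≤ ξ) {x : X} (hx : x ∈ A) :
    IsAnchor A ξ x x :=
  ⟨hx, (dist_self x).trans_le hξ, fun _ ↦ rfl⟩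

theorem IsCoarselyDense.exists_isAnchor [PseudoMetricSpace X] {A : Set X} {ξ : ℝ}
    (hA : IsCoarselyDense ξ A) (x : X) : ∃ a, IsAnchor A ξ x a := by
  by_cases hx : x ∈ A
  · have : Nonempty X := ⟨x⟩
    exact ⟨x, isAnchor_self hA.nonneg hx⟩
  · obtain ⟨a, ha, hdist⟩ := hA x
    exact ⟨a, ha, hdist, fun h ↦ absurd h hx⟩

theorem IsCoarselyDense.eventually_exists_isAnchor [MetricSpace X] {A : Set X} {ξ : ℝ}
    (hA : IsCoarselyDense ξ A) {a : X} (ha : a ∈ A) :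
    ∀ᶠ x in 𝓝 a, ∃ b, IsAnchor A ξ x b ∧ dist a b ≤ dist a x := by
  have : Nonempty X := ⟨a⟩
  have near {x : X} (hx : x ∈ A ∨ dist x a ≤ ξ) : ∃ b, IsAnchor A ξ x b ∧ dist a b ≤ dist a x := by
    by_cases hxA : x ∈ A
    · exact ⟨x, isAnchor_self hA.nonneg hxA, le_rfl⟩
    · exact ⟨a, ⟨ha, hx.resolve_left hxA, fun h ↦ absurd h hxA⟩, by simp⟩
  rcases hA.nonneg.eq_or_lt with rfl | hξ
  · exact .of_forall fun x ↦ near (.inl (hA.eq_univ ▸ mem_univ x))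
  · filter_upwards [closedBall_mem_nhds a hξ] with x hx using near (.inr hx)

namespace IsCoarseQuasiIsometryOn

variable [PseudoMetricSpace X] [PseudoMetricSpace Y] {M L : ℝ} {T : X → Y} {A : Set X}

theorem mono {L' : ℝ} (hT : IsCoarseQuasiIsometryOn M L T A) (hL : L ≤ L') :
    IsCoarseQuasiIsometryOn M L' T A where
  le_dist x hx y hy := (sub_le_sub_left hL _).trans (hT.le_dist x hx y hy)
  dist_le x hx y hy := (hT.dist_le x hx y hy).trans (by gcongr)

theorem nonneg (hT : IsCoarseQuasiIsometryOn M L T A) (hA : A.Nonempty) : 0 ≤ L := by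
  obtain ⟨a, ha⟩ := hA
  simpa using hT.dist_le a ha a ha

theorem dist_le_mul_add (hT : IsCoarseQuasiIsometryOn M L T A) (hM : 0 < M) {x y : X}
    (hx : x ∈ A) (hy : y ∈ A) : dist x y ≤ M * (dist (T x) (T y) + L) := by
  have := hT.le_dist x hx y hy
  rwa [sub_le_iff_le_add, one_div, inv_mul_le_iff₀ hM] at this

theorem injOn {X : Type*} [MetricSpace X] {T : X → Y} {A : Set X}
    (hT : IsCoarseQuasiIsometryOn M 0 T A) (hM : 0 < M) : InjOn T A := fun x hx y hy hxy ↦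
  dist_le_zero.1 <| by simpa [hxy] using hT.dist_le_mul_add hM hx hy

variable {x y a b : X} {u v : Y} {ξ ξ' κ κ' : ℝ}

theorem dist_le_of_dist_le (hT : IsCoarseQuasiIsometryOn M L T A) (hM : 0 ≤ M) (ha : a ∈ A)
    (hb : b ∈ A) (hxa : dist x a ≤ ξ) (hyb : dist y b ≤ ξ') (hu : dist u (T a) ≤ κ)
    (hv : dist v (T b) ≤ κ') : dist u v ≤ M * dist x y + (L + M * (ξ + ξ') + (κ + κ')) := by
  have dist_anchors : dist a b ≤ ξ + dist x y + ξ' :=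
    (dist_triangle4 a x y b).trans (by rw [dist_comm a x]; gcongr)
  calc dist u v ≤ dist u (T a) + dist (T a) (T b) + dist (T b) v := dist_triangle4 _ _ _ _
    _ ≤ κ + (M * (ξ + dist x y + ξ') + L) + κ' := by
      rw [dist_comm (T b)]
      gcongr
      exact (hT.dist_le a ha b hb).trans (by gcongr)
    _ = M * dist x y + (L + M * (ξ + ξ') + (κ + κ')) := by ring

theorem le_dist_of_dist_le (hT : IsCoarseQuasiIsometryOn M L T A) (hM : 0 < M) (ha : a ∈ A)
    (hb : b ∈ A) (hxa : dist x a ≤ ξ) (hyb : dist y b ≤ ξ') (hu : dist u (T a) ≤ κ)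
    (hv : dist v (T b) ≤ κ') :
    1 / M * dist x y - (L + 1 / M * (ξ + ξ') + (κ + κ')) ≤ dist u v := by
  have dist_points : dist x y ≤ ξ + dist a b + ξ' :=
    (dist_triangle4 x a b y).trans (by rw [dist_comm b y]; gcongr)
  have dist_images : dist (T a) (T b) ≤ κ + dist u v + κ' :=
    (dist_triangle4 (T a) u v (T b)).trans (by rw [dist_comm (T a)]; gcongr)
  have scaled : 1 / M * dist x y ≤ 1 / M * (ξ + dist a b + ξ') := by gcongr
  linarith [hT.le_dist a ha b hb]

theorem one_le {E : Type*} [NormedAddCommGroup E] [NormedSpace ℝ E] [Nontrivial E] {A : Set E}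
    {T : E → Y} (hT : IsCoarseQuasiIsometryOn M L T A) (hM : 0 < M)
    (hA : IsCoarselyDense ξ A) : 1 ≤ M := by
  by_contra! hM₁
  have gap : 0 < 1 / M - M := sub_pos.2 (hM₁.trans ((one_lt_div hM).2 hM₁))
  refine NormedSpace.unbounded_univ ℝ E <| Metric.isBounded_iff.2
    ⟨ξ + 2 * L / (1 / M - M) + ξ, fun x _ y _ ↦ ?_⟩
  obtain ⟨a, ha, hxa⟩ := hA x
  obtain ⟨b, hb, hyb⟩ := hA y
  have dist_anchors : dist a b ≤ 2 * L / (1 / M - M) := by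
    rw [le_div_iff₀ gap]
    linarith [hT.le_dist a ha b hb, hT.dist_le a ha b hb]
  linarith [dist_triangle4 x a b y, dist_comm y b]

theorem of_forall_exists_isAnchor (hT : IsCoarseQuasiIsometryOn M L T A) (hM : 1 ≤ M)
    (hξ : 0 ≤ ξ) {T' : X → Y} (hT' : ∀ x, ∃ a, IsAnchor A ξ x a ∧ dist (T' x) (T a) ≤ κ) :
    IsCoarseQuasiIsometryOn M (L + 2 * M * ξ + 2 * κ) T' univ := by
  have hM₀ : 0 < M := one_pos.trans_le hM
  have inv_mul_le : 1 / M * ξ ≤ M * ξ := by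
    gcongr
    exact ((div_le_one hM₀).2 hM).trans hM
  constructor <;> intro x _ y _ <;> obtain ⟨a, ha, hxa⟩ := hT' x <;> obtain ⟨b, hb, hyb⟩ := hT' y
  · linarith [hT.le_dist_of_dist_le hM₀ ha.mem hb.mem ha.dist_le hb.dist_le hxa hyb]
  · linarith [hT.dist_le_of_dist_le hM₀.le ha.mem hb.mem ha.dist_le hb.dist_le hxa hyb]

theorem of_forall_eq_or_exists_isAnchor (hT : IsCoarseQuasiIsometryOn M 0 T A) (hM : 1 ≤ M)
    {δ : ℝ} (hξ : 0 ≤ ξ) (hδ₀ : 0 ≤ δ) (hδ : δ ≤ (M - 1 / M) * ξ) {U : Y → Set Y}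
    (hU : ∀ p, ∀ z ∈ U p, dist z p ≤ δ)
    (hUU : ∀ p q, ∀ z ∈ U p, ∀ w ∈ U q, dist z w ≤ max (dist p q) δ) {T' : X → Y}
    (hT' : ∀ x, (x ∈ A ∧ T' x = T x) ∨ ∃ a, IsAnchor A ξ x a ∧ T' x ∈ U (T a)) :
    IsCoarseQuasiIsometryOn M (2 * M * ξ) T' univ := by
  have hM₀ : 0 < M := one_pos.trans_le hM
  have hδM : δ ≤ M * ξ := hδ.trans (by gcongr; exact sub_le_self _ (by positivity))
  have anchor (x : X) : ∃ a, IsAnchor A ξ x a ∧ dist (T' x) (T a) ≤ δ := by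
    rcases hT' x with ⟨hx, h⟩ | ⟨a, ha, h⟩
    · exact ⟨x, isAnchor_self hξ hx, by rwa [h, dist_self]⟩
    · exact ⟨a, ha, hU _ _ h⟩
  have dist_le_of_eq {x : X} (y : X) (hx : x ∈ A) (h : T' x = T x) :
      dist (T' x) (T' y) ≤ M * dist x y + 2 * M * ξ := by
    obtain ⟨b, hb, hyb⟩ := anchor y
    have hx' : dist (T' x) (T x) ≤ 0 := by rw [h, dist_self]
    linarith [hT.dist_le_of_dist_le hM₀.le hx hb.mem (dist_self x).le hb.dist_le hx' hyb]
  refine ⟨fun x _ y _ ↦ ?_, fun x _ y _ ↦ ?_⟩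
  · obtain ⟨a, ha, hxa⟩ := anchor x
    obtain ⟨b, hb, hyb⟩ := anchor y
    linarith [hT.le_dist_of_dist_le hM₀ ha.mem hb.mem ha.dist_le hb.dist_le hxa hyb]
  · rcases hT' x with ⟨hx, h⟩ | ⟨a, ha, hxa⟩
    · exact dist_le_of_eq y hx h
    rcases hT' y with ⟨hy, h⟩ | ⟨b, hb, hyb⟩
    · simpa only [dist_comm] using dist_le_of_eq x hy h
    refine (hUU _ _ _ hxa _ hyb).trans (max_le ?_ ?_)
    · linarith [hT.dist_le_of_dist_le hM₀.le ha.mem hb.mem ha.dist_le hb.dist_le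
        (dist_self (T a)).le (dist_self (T b)).le]
    · linarith [mul_nonneg hM₀.le (dist_nonneg (x := x) (y := y)), hδ₀.trans hδM]

end IsCoarseQuasiIsometryOn

theorem dist_le_of_forall_exists_isAnchor [PseudoMetricSpace X] [PseudoMetricSpace Y]
    {A : Set X} {ξ κ : ℝ} {T T' : X → Y}
    (hT' : ∀ x, ∃ a, IsAnchor A ξ x a ∧ dist (T' x) (T a) ≤ κ) {x : X} (hx : x ∈ A) :
    dist (T' x) (T x) ≤ κ := by
  obtain ⟨a, ha, hxa⟩ := hT' x
  rwa [ha.eq_of_mem hx] at hxa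

end Coarse

section Figiel

variable {E F : Type*} [NormedAddCommGroup E] [NormedSpace ℝ E] [NormedAddCommGroup F]
  [NormedSpace ℝ F]

theorem tendsto_norm_natCast_smul_add_sub_norm {u : F} (hu : DifferentiableAt ℝ (fun x ↦ ‖x‖) u)
    (v : F) : Tendsto (fun m : ℕ ↦ ‖(m : ℝ) • u + v‖ - ‖(m : ℝ) • u‖) atTop
      (𝓝 (fderiv ℝ (fun x ↦ ‖x‖) u v)) := by
  have tendsto_quotient := hu.hasFDerivAt.lim v (c := fun m : ℕ ↦ (m : ℝ)) (l := atTop)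
    (by simpa only [Real.norm_natCast] using tendsto_natCast_atTop_atTop)
  refine tendsto_quotient.congr' ?_
  filter_upwards [eventually_ne_atTop 0] with m hm
  have norm_natCast_smul (w : F) : ‖(m : ℝ) • w‖ = m * ‖w‖ := by
    rw [norm_smul, Real.norm_natCast]
  rw [smul_eq_mul, mul_sub, ← norm_natCast_smul, ← norm_natCast_smul, smul_add,
    smul_inv_smul₀ (Nat.cast_ne_zero.2 hm)]

/-- A functional norming `S y - S (-y)` takes the values `‖y‖` at `S y` and `-‖y‖` at `S (-y)`. -/
theorem exists_dual_apply_isometry_mem_Icc {S : F → E} (hS : Isometry S) (h0 : S 0 = 0) (y : F) :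
    ∃ h : StrongDual ℝ E, ‖h‖ ≤ 1 ∧ ∀ v, h (S v) ∈ Icc (‖y‖ - ‖y - v‖) (‖y + v‖ - ‖y‖) := by
  obtain ⟨h, h_norm, h_norming⟩ := exists_dual_vector'' ℝ (S y - S (-y))
  have sub_le (a b : F) : h (S a) - h (S b) ≤ ‖a - b‖ := by
    rw [← map_sub, ← dist_eq_norm, ← hS.dist_eq, dist_eq_norm]
    simpa only [one_mul] using (le_abs_self _).trans (h.le_of_opNorm_le h_norm (S a - S b))
  have sub_eq : h (S y) - h (S (-y)) = ‖y‖ + ‖y‖ := by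
    rw [← map_sub, h_norming, ← dist_eq_norm, hS.dist_eq, dist_eq_norm, sub_neg_eq_add,
      ← two_smul ℝ, norm_smul, Real.norm_ofNat, two_mul, RCLike.ofReal_real_eq_id, id]
  have at_y := sub_le y 0
  have at_neg_y := sub_le 0 (-y)
  rw [h0, map_zero, sub_zero, sub_zero] at at_y
  rw [h0, map_zero, zero_sub, zero_sub, neg_neg] at at_neg_y
  refine ⟨h, h_norm, fun v ↦ ⟨?_, ?_⟩⟩
  · linarith [sub_le y v]
  · have := sub_le v (-y)
    rw [sub_neg_eq_add, add_comm] at this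
    linarith

theorem fderiv_norm_sum_smul_le {S : F → E} (hS : Isometry S) (h0 : S 0 = 0) {u : F}
    (hu : DifferentiableAt ℝ (fun x ↦ ‖x‖) u) {ι : Type*} [Fintype ι] (c : ι → ℝ) (v : ι → F) :
    fderiv ℝ (fun x ↦ ‖x‖) u (∑ i, c i • v i) ≤ ‖∑ i, c i • S (v i)‖ := by
  choose h h_norm h_mem using fun m : ℕ ↦ exists_dual_apply_isometry_mem_Icc hS h0 ((m : ℝ) • u)
  have tendsto_h (w : F) :
      Tendsto (fun m ↦ h m (S w)) atTop (𝓝 (fderiv ℝ (fun x ↦ ‖x‖) u w)) := by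
    have lower := (tendsto_norm_natCast_smul_add_sub_norm hu (-w)).neg
    simp only [map_neg, neg_neg, neg_sub, ← sub_eq_add_neg] at lower
    exact tendsto_of_tendsto_of_tendsto_of_le_of_le lower
      (tendsto_norm_natCast_smul_add_sub_norm hu w) (fun m ↦ (h_mem m w).1) fun m ↦ (h_mem m w).2
  simp only [map_sum, map_smul]
  refine le_of_tendsto' (tendsto_finsetSum _ fun i _ ↦ (tendsto_h (v i)).const_smul (c i))
    fun m ↦ ?_
  simpa only [map_sum, map_smul, one_mul] using
    (le_abs_self _).trans ((h m).le_of_opNorm_le (h_norm m) (∑ i, c i • S (v i)))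

theorem norm_sum_smul_le_of_isometry_of_finiteDimensional [FiniteDimensional ℝ F] {S : F → E}
    (hS : Isometry S) (h0 : S 0 = 0) {ι : Type*} [Fintype ι] (c : ι → ℝ) (v : ι → F) :
    ‖∑ i, c i • v i‖ ≤ ‖∑ i, c i • S (v i)‖ := by
  set x := ∑ i, c i • v i
  suffices ∀ u, ‖u‖ - ‖u - x‖ ≤ ‖∑ i, c i • S (v i)‖ by simpa using this x
  refine dense_differentiableAt_norm.induction (fun u hu ↦ ?_)
    (isClosed_le (by fun_prop) continuous_const)
  have fderiv_norm_le : ‖fderiv ℝ (fun x : F ↦ ‖x‖) u‖ ≤ 1 := by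
    simpa only [NNReal.coe_one] using
      norm_fderiv_le_of_lipschitz ℝ (x₀ := u) (lipschitzWith_one_norm (E := F))
  have fderiv_sub_le : fderiv ℝ (fun x ↦ ‖x‖) u (u - x) ≤ ‖u - x‖ := by
    simpa only [one_mul] using
      (le_abs_self _).trans (ContinuousLinearMap.le_of_opNorm_le _ fderiv_norm_le (u - x))
  rw [map_sub, hu.fderiv_norm_self] at fderiv_sub_le
  linarith [fderiv_norm_sum_smul_le hS h0 hu c v]

/-- Figiel's theorem: an isometric embedding fixing the origin has a linear left inverse of norm
at most one on the span of its range. -/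
theorem norm_sum_smul_le_of_isometry {S : F → E} (hS : Isometry S) (h0 : S 0 = 0) {ι : Type*}
    [Fintype ι] (c : ι → ℝ) (v : ι → F) : ‖∑ i, c i • v i‖ ≤ ‖∑ i, c i • S (v i)‖ := by
  let G := Submodule.span ℝ (range v)
  have : FiniteDimensional ℝ G := FiniteDimensional.span_of_finite ℝ (finite_range v)
  let w (i : ι) : G := ⟨v i, Submodule.subset_span (mem_range_self i)⟩
  simpa [w] using norm_sum_smul_le_of_isometry_of_finiteDimensional
    (S := fun x : G ↦ S x) (hS.comp isometry_subtype_coe) h0 c w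

theorem eq_top_of_isClosed_of_isCoarselyDense {K : Submodule ℝ E} (hK : IsClosed (K : Set E))
    {ξ : ℝ} (hξ : IsCoarselyDense ξ (K : Set E)) : K = ⊤ := by
  by_contra hne
  obtain ⟨x, -, -, hx⟩ := riesz_lemma_of_lt_one hK
    (by simpa only [Submodule.eq_top_iff', not_forall] using hne) one_half_lt_one
  obtain ⟨_, -, h0⟩ := hξ 0
  have hξ0 : 0 ≤ ξ := dist_nonneg.trans h0
  obtain ⟨k, hk, hdist⟩ := hξ ((2 * ξ + 1) • x)
  have dist_eq : dist ((2 * ξ + 1) • x) k = (2 * ξ + 1) * ‖x - (2 * ξ + 1)⁻¹ • k‖ := by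
    rw [← abs_of_pos (by positivity : 0 < 2 * ξ + 1), ← Real.norm_eq_abs, ← norm_smul, smul_sub,
      Real.norm_of_nonneg (by positivity), smul_inv_smul₀ (by positivity), dist_eq_norm]
  have far := hx _ (K.smul_mem (2 * ξ + 1)⁻¹ hk)
  nlinarith

/-- The `n`-fold defect `w` of additivity lies within `ξ` of some `S r`. The arguments of `S` in `w`
cancel, so Figiel's inequality bounds `‖S r‖ = ‖r‖`, and hence `‖w‖`, uniformly in `n`. -/
theorem map_add_of_isometry_of_isCoarselyDense_range {S : F → E} (hS : Isometry S) (h0 : S 0 = 0)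
    {ξ : ℝ} (hξ : IsCoarselyDense ξ (range S)) (p q : F) : S (p + q) = S p + S q := by
  refine eq_of_forall_nat_mul_dist_le (C := 2 * ξ) fun n ↦ ?_
  set w := (n : ℝ) • (S (p + q) - (S p + S q)) with hw
  obtain ⟨_, ⟨r, rfl⟩, hr⟩ := hξ w
  have norm_S : ‖S r‖ = ‖r‖ := by
    simpa only [h0, dist_zero_right] using hS.dist_eq r 0
  have norm_le : ‖r‖ ≤ ‖S r - w‖ := by
    have := norm_sum_smul_le_of_isometry hS h0 ![1, -n, n, n] ![r, p + q, p, q]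
    simp only [Fin.sum_univ_four, Matrix.cons_val, one_smul] at this
    convert this using 2
    · module
    · rw [hw]
      module
  rw [dist_eq_norm] at hr
  calc n * dist (S (p + q)) (S p + S q) = ‖w‖ := by
        rw [hw, norm_smul, Real.norm_natCast, dist_eq_norm]
    _ ≤ ‖w - S r‖ + ‖S r‖ := norm_le_norm_sub_add _ _
    _ ≤ 2 * ξ := by linarith [norm_sub_rev (S r) w]

/-- Coarsely dense range forces an isometric embedding to be affine; a coarsely dense
closed subspace is everything. -/
theorem surjective_of_isometry_of_isCoarselyDense_range [CompleteSpace F] {S : F → E}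
    (hS : Isometry S) {ξ : ℝ} (hξ : IsCoarselyDense ξ (range S)) : Surjective S := by
  let S₀ (p : F) : E := S p - S 0
  have S₀_isometry : Isometry S₀ := (IsometryEquiv.subRight (S 0)).isometry.comp hS
  have S₀_zero : S₀ 0 = 0 := sub_self _
  have S₀_dense : IsCoarselyDense ξ (range S₀) := fun x ↦ by
    obtain ⟨_, ⟨p, rfl⟩, hp⟩ := hξ (x + S 0)
    refine ⟨S₀ p, mem_range_self p, ?_⟩
    simpa [S₀, dist_eq_norm, sub_sub_eq_add_sub] using hp
  let Λ : F →L[ℝ] E := AddMonoidHom.toRealLinearMap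
    ⟨⟨S₀, S₀_zero⟩, map_add_of_isometry_of_isCoarselyDense_range S₀_isometry S₀_zero S₀_dense⟩
    S₀_isometry.continuous
  have Λ_range : (Λ.range : Set E) = range S₀ := Λ.coe_range
  have Λ_surjective : Λ.range = ⊤ := eq_top_of_isClosed_of_isCoarselyDense
    (by rw [Λ_range]; exact S₀_isometry.isClosedEmbedding.isClosed_range) (by rwa [Λ_range])
  intro z
  obtain ⟨p, hp⟩ := LinearMap.range_eq_top.1 Λ_surjective (z - S 0)
  exact ⟨p, sub_left_injective hp⟩

end Figiel

section RigidCase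

variable {E F : Type*} [NormedAddCommGroup E] [NormedSpace ℝ E] [NormedAddCommGroup F]
  [NormedSpace ℝ F]

theorem IsCoarselyDense.eq_univ_of_isometryOn [CompleteSpace F] {ξ : ℝ} {A : Set E}
    (hA : IsCoarselyDense ξ A) {T : E → F}
    (hT : ∀ x ∈ A, ∀ y ∈ A, dist (T x) (T y) = dist x y) (hsurj : SurjOn T A univ) : A = univ := by
  choose S hSA hTS using fun z ↦ hsurj (mem_univ z)
  have S_isometry : Isometry S := .of_dist_eq fun z w ↦ by
    rw [← hT _ (hSA z) _ (hSA w), hTS, hTS]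
  have S_T {a : E} (ha : a ∈ A) : S (T a) = a := by
    rw [← dist_eq_zero, ← hT _ (hSA _) _ ha, hTS, dist_self]
  have S_dense : IsCoarselyDense ξ (range S) := fun x ↦ by
    obtain ⟨a, ha, hxa⟩ := hA x
    exact ⟨a, ⟨T a, S_T ha⟩, hxa⟩
  refine eq_univ_of_forall fun x ↦ ?_
  obtain ⟨z, rfl⟩ := surjective_of_isometry_of_isCoarselyDense_range S_isometry S_dense x
  exact hSA z

end RigidCase

section Shrink

theorem sq_div_add_sq_div_le {G : Type*} [SeminormedAddCommGroup G] {ε : ℝ} (hε₀ : 0 ≤ ε)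
    (hε₁ : ε ≤ 1) (p q : G) (hpq : ε ≤ dist p q) :
    (ε / (1 + ‖p‖)) ^ 2 / 4 + (ε / (1 + ‖q‖)) ^ 2 / 4 ≤
      ε * dist p q / ((1 + ‖p‖) * (1 + ‖q‖)) := by
  wlog hqp : ‖q‖ ≤ ‖p‖ generalizing p q
  · simpa only [dist_comm, mul_comm, add_comm ((ε / (1 + ‖p‖)) ^ 2 / 4)] using
      this q p (dist_comm p q ▸ hpq) (le_of_not_ge hqp)
  have norm_le : ‖p‖ ≤ ‖q‖ + dist p q := by
    linarith [norm_sub_norm_le p q, dist_eq_norm p q]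
  have key : ε * (1 + ‖p‖) ≤ 2 * dist p q * (1 + ‖q‖) := by
    have : ε * dist p q ≤ dist p q := mul_le_of_le_one_left dist_nonneg hε₁
    nlinarith [norm_nonneg q, dist_nonneg (x := p) (y := q)]
  calc (ε / (1 + ‖p‖)) ^ 2 / 4 + (ε / (1 + ‖q‖)) ^ 2 / 4
      ≤ (ε / (1 + ‖q‖)) ^ 2 / 4 + (ε / (1 + ‖q‖)) ^ 2 / 4 := by gcongr
    _ = ε * (ε * (1 + ‖p‖)) / (2 * (1 + ‖q‖) ^ 2 * (1 + ‖p‖)) := by field_simp; ring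
    _ ≤ ε * (2 * dist p q * (1 + ‖q‖)) / (2 * (1 + ‖q‖) ^ 2 * (1 + ‖p‖)) := by gcongr
    _ = ε * dist p q / ((1 + ‖p‖) * (1 + ‖q‖)) := by field_simp

variable {F : Type*} [SeminormedAddCommGroup F] [NormedSpace ℝ F]

/-- The radial map `p ↦ (1 - ε / (1 + ‖p‖)) • p`. It moves every point by at most `ε` and, for
`0 < ε ≤ 1`, contracts distances strictly, which leaves room for a ball around each image point. -/
noncomputable def shrink (ε : ℝ) (p : F) : F :=
  (1 - ε / (1 + ‖p‖)) • p

theorem dist_shrink_self_le {ε : ℝ} (hε : 0 ≤ ε) (p : F) : dist (shrink ε p) p ≤ ε := by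
  rw [dist_eq_norm, shrink, sub_smul, one_smul, sub_sub_cancel_left, norm_neg, norm_smul,
    Real.norm_of_nonneg (by positivity), div_mul_comm]
  exact mul_le_of_le_one_left hε (div_le_one_of_le₀ (by linarith) (by positivity))

theorem dist_shrink_add_le {ε : ℝ} (hε₀ : 0 ≤ ε) (hε₁ : ε ≤ 1) (p q : F) :
    dist (shrink ε p) (shrink ε q) + ε * dist p q / ((1 + ‖p‖) * (1 + ‖q‖)) ≤ dist p q := by
  wlog hqp : ‖q‖ ≤ ‖p‖ generalizing p q
  · simpa only [dist_comm, mul_comm] using this q p (le_of_not_ge hqp)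
  have coeff_nonneg : 0 ≤ 1 - ε / (1 + ‖q‖) :=
    sub_nonneg.2 (div_le_one_of_le₀ (by linarith [norm_nonneg q]) (by positivity))
  have coeff_diff_nonneg : 0 ≤ ε / (1 + ‖q‖) - ε / (1 + ‖p‖) := sub_nonneg.2 (by gcongr)
  have coeff_diff_le :
      (ε / (1 + ‖q‖) - ε / (1 + ‖p‖)) * ‖p‖ ≤ ε * dist p q * ‖p‖ / ((1 + ‖p‖) * (1 + ‖q‖)) := by
    calc (ε / (1 + ‖q‖) - ε / (1 + ‖p‖)) * ‖p‖
        = ε * (‖p‖ - ‖q‖) * ‖p‖ / ((1 + ‖p‖) * (1 + ‖q‖)) := by field_simp; ring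
      _ ≤ ε * dist p q * ‖p‖ / ((1 + ‖p‖) * (1 + ‖q‖)) := by
        gcongr
        exact (norm_sub_norm_le p q).trans_eq (dist_eq_norm p q).symm
  have dist_shrink_le : dist (shrink ε p) (shrink ε q) ≤
      (1 - ε / (1 + ‖q‖)) * dist p q + (ε / (1 + ‖q‖) - ε / (1 + ‖p‖)) * ‖p‖ := by
    have decomposition : shrink ε p - shrink ε q =
        (1 - ε / (1 + ‖q‖)) • (p - q) + (ε / (1 + ‖q‖) - ε / (1 + ‖p‖)) • p := by
      unfold shrink
      module
    rw [dist_eq_norm, decomposition, dist_eq_norm]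
    refine (norm_add_le _ _).trans_eq ?_
    rw [norm_smul, norm_smul, Real.norm_of_nonneg coeff_nonneg,
      Real.norm_of_nonneg coeff_diff_nonneg]
  calc dist (shrink ε p) (shrink ε q) + ε * dist p q / ((1 + ‖p‖) * (1 + ‖q‖))
      ≤ (1 - ε / (1 + ‖q‖)) * dist p q + ε * dist p q * ‖p‖ / ((1 + ‖p‖) * (1 + ‖q‖)) +
          ε * dist p q / ((1 + ‖p‖) * (1 + ‖q‖)) := by linarith
    _ = dist p q := by field_simp; ring

theorem exists_nonempty_interior_dist_le_max (F : Type*) [SeminormedAddCommGroup F]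
    [NormedSpace ℝ F] {δ : ℝ} (hδ : 0 < δ) : ∃ U : F → Set F, (∀ p, (interior (U p)).Nonempty) ∧
      (∀ p, ∀ z ∈ U p, dist z p ≤ δ) ∧
      ∀ p q, ∀ z ∈ U p, ∀ w ∈ U q, dist z w ≤ max (dist p q) δ := by
  set ε := min 1 (δ / 4)
  have hε : 0 < ε := lt_min one_pos (by positivity)
  have hε₁ : ε ≤ 1 := min_le_left _ _
  have hεδ : 4 * ε ≤ δ := by linarith [min_le_right 1 (δ / 4)]
  -- Balls of these radii around image points fit into the gap left by `dist_shrink_add_le`.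
  let r (p : F) : ℝ := (ε / (1 + ‖p‖)) ^ 2 / 4
  have r_pos (p : F) : 0 < r p := by positivity
  have r_le (p : F) : r p ≤ ε / 4 := by
    have : ε / (1 + ‖p‖) ≤ ε := div_le_self hε.le (by linarith [norm_nonneg p])
    have : 0 ≤ ε / (1 + ‖p‖) := by positivity
    simp only [r]
    nlinarith
  have dist_le {p z : F} (hz : z ∈ closedBall (shrink ε p) (r p)) : dist z p ≤ 5 / 4 * ε := by
    linarith [dist_triangle z (shrink ε p) p, mem_closedBall.1 hz, r_le p,
      dist_shrink_self_le hε.le p]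
  refine ⟨fun p ↦ closedBall (shrink ε p) (r p), fun p ↦ ⟨shrink ε p, ?_⟩,
    fun p z hz ↦ (dist_le hz).trans (by linarith), fun p q z hz w hw ↦ ?_⟩
  · exact mem_interior_iff_mem_nhds.2 (closedBall_mem_nhds _ (r_pos p))
  rcases le_total ε (dist p q) with hpq | hpq
  · refine le_max_of_le_left ?_
    calc dist z w ≤ r p + dist (shrink ε p) (shrink ε q) + r q :=
          (dist_triangle4 z _ _ w).trans (by gcongr; exacts [hz, mem_closedBall'.1 hw])
      _ ≤ dist (shrink ε p) (shrink ε q) + ε * dist p q / ((1 + ‖p‖) * (1 + ‖q‖)) := by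
        rw [add_right_comm, add_comm]
        gcongr
        exact sq_div_add_sq_div_le hε.le hε₁ p q hpq
      _ ≤ dist p q := dist_shrink_add_le hε.le hε₁ p q
  · refine le_max_of_le_right ?_
    linarith [dist_triangle4 z p q w, dist_le hz, dist_le hw, dist_comm q w]

end Shrink

section Extension

variable {E : Type u} {F : Type v} [NormedAddCommGroup E] [NormedSpace ℝ E]
  [NormedAddCommGroup F] [NormedSpace ℝ F] {M L ξE ξF : ℝ} {A : Set E} {T : E → F}

theorem exists_injective_forall_rel_of_nonempty_interior {α : Type*} (e : α ≃ F)
    {R : α → F → Prop} (hR : ∀ x, (interior {z | R x z}).Nonempty) :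
    ∃ f : α → F, Injective f ∧ ∀ x, R x (f x) := by
  refine exists_injective_forall_rel fun x ↦ ?_
  obtain ⟨z, hz⟩ := hR x
  obtain ⟨e'⟩ := Cardinal.eq.1 (cardinal_eq_of_mem_nhds ℝ (mem_interior_iff_mem_nhds.1 hz))
  exact ⟨(e.trans e'.symm).toEmbedding⟩

theorem nonempty_embedding_of_dist_le [CompleteSpace F] {f : E → F} {C : ℝ}
    (hf : ∀ x y, f x = f y → dist x y ≤ C) : Nonempty (E ↪ F) := by
  have mk_arrow_eq : #(ℕ → F) = #F := by
    simpa only [Cardinal.mk_arrow, Cardinal.mk_nat, Cardinal.lift_uzero, Cardinal.lift_aleph0] using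
      mk_power_aleph0_eq_of_completeSpace (F := F)
  obtain ⟨e⟩ := Cardinal.eq.1 mk_arrow_eq
  exact ⟨.trans ⟨_, injective_apply_nat_smul hf⟩ e.toEmbedding⟩

namespace IsCoarseQuasiIsometryOn

theorem nonempty_equiv [CompleteSpace E] [CompleteSpace F]
    (hT : IsCoarseQuasiIsometryOn M L T A) (hM : 0 < M) (hA : IsCoarselyDense ξE A)
    (hTA : IsCoarselyDense ξF (T '' A)) : Nonempty (E ≃ F) := by
  choose a haA ha using hA
  choose _ hbT hb using hTA
  choose b _ hbT using hbT
  obtain ⟨i⟩ : Nonempty (E ↪ F) :=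
    nonempty_embedding_of_dist_le (f := fun x ↦ T (a x)) (C := ξE + M * L + ξE) fun x y hxy ↦ by
      have dist_anchors : dist (a x) (a y) ≤ M * L := by
        simpa only [hxy, dist_self, zero_add] using hT.dist_le_mul_add hM (haA x) (haA y)
      linarith [dist_triangle4 x (a x) (a y) y, ha x, ha y, dist_comm y (a y)]
  obtain ⟨j⟩ : Nonempty (F ↪ E) :=
    nonempty_embedding_of_dist_le (f := b) (C := ξF + ξF) fun z w hzw ↦ by
      have hz := hb z
      have hw := hb w
      rw [← hbT] at hz hw
      exact (dist_triangle_right z w (T (b z))).trans (add_le_add hz (hzw ▸ hw))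
  exact i.antisymm j

theorem exists_bijective_of_lt (hT : IsCoarseQuasiIsometryOn M L T A) (e : E ≃ F) (hM : 1 ≤ M)
    (hA : IsCoarselyDense ξE A) (hTA : IsCoarselyDense ξF (T '' A)) {κ : ℝ} (hκ : L + ξF < κ) :
    ∃ T' : E → F, Bijective T' ∧ IsCoarseQuasiIsometryOn M (L + 2 * M * ξE + 2 * κ) T' univ ∧
      ∀ x ∈ A, dist (T' x) (T x) ≤ κ := by
  have hκ₀ : 0 < κ := by linarith [hT.nonneg hA.nonempty, hTA.nonneg]
  let R (x : E) (z : F) : Prop := ∃ a, IsAnchor A ξE x a ∧ dist z (T a) ≤ κ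
  have targets_interior (x : E) : (interior {z | R x z}).Nonempty := by
    obtain ⟨a, ha⟩ := hA.exists_isAnchor x
    exact ⟨T a, mem_interior_iff_mem_nhds.2 <| mem_of_superset (closedBall_mem_nhds _ hκ₀)
      fun z hz ↦ ⟨a, ha, hz⟩⟩
  have sources_interior (z : F) : (interior {x | R x z}).Nonempty := by
    obtain ⟨_, ⟨a, ha, rfl⟩, hza⟩ := hTA z
    have slack : ∀ᶠ x in 𝓝 a, M * dist a x < κ - ξF - L := by
      refine ContinuousAt.eventually_lt (by fun_prop) continuousAt_const ?_
      rw [dist_self, mul_zero]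
      linarith
    refine ⟨a, mem_interior_iff_mem_nhds.2 ?_⟩
    filter_upwards [hA.eventually_exists_isAnchor ha, slack] with x ⟨b, hb, hab⟩ hx
    have : M * dist a b ≤ M * dist a x := by gcongr
    exact ⟨b, hb, by linarith [dist_triangle z (T a) (T b), hT.dist_le a ha b hb.mem]⟩
  obtain ⟨i, hi, hiR⟩ := exists_injective_forall_rel_of_nonempty_interior e targets_interior
  obtain ⟨j, hj, hjR⟩ := exists_injective_forall_rel_of_nonempty_interior e.symm sources_interior
  obtain ⟨T', hT'_bij, hT'⟩ := Embedding.schroeder_bernstein_of_rel hi hj R hiR hjR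
  exact ⟨T', hT'_bij, hT.of_forall_exists_isAnchor hM hA.nonneg hT',
    fun x ↦ dist_le_of_forall_exists_isAnchor hT'⟩

theorem exists_bijective_of_surjOn_of_one_lt {X : Type*} [PseudoMetricSpace X] {ξ : ℝ} {A : Set X}
    {T : X → F} (hT : IsCoarseQuasiIsometryOn M 0 T A) (e : X ≃ F) (hM : 1 < M) (hξ : 0 < ξ)
    (hA : IsCoarselyDense ξ A) (hsurj : SurjOn T A univ) :
    ∃ T' : X → F, Bijective T' ∧ IsCoarseQuasiIsometryOn M (2 * M * ξ) T' univ ∧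
      ∀ x ∈ A, dist (T' x) (T x) ≤ M * ξ := by
  set δ := (M - 1 / M) * ξ
  have hδ : 0 < δ :=
    mul_pos (sub_pos.2 (((div_lt_one (one_pos.trans hM)).2 hM).trans hM)) hξ
  have hδM : δ ≤ M * ξ := by
    simp only [δ]
    gcongr
    exact sub_le_self _ (by positivity)
  obtain ⟨U, hU_interior, hU, hUU⟩ := exists_nonempty_interior_dist_le_max F hδ
  let R (x : X) (z : F) : Prop := (x ∈ A ∧ z = T x) ∨ ∃ a, IsAnchor A ξ x a ∧ z ∈ U (T a)
  have targets_interior (x : X) : (interior {z | R x z}).Nonempty := by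
    obtain ⟨a, ha⟩ := hA.exists_isAnchor x
    exact (hU_interior (T a)).mono (interior_mono fun z hz ↦ .inr ⟨a, ha, hz⟩)
  obtain ⟨i, hi, hiR⟩ := exists_injective_forall_rel_of_nonempty_interior e targets_interior
  choose j hjA hTj using fun z ↦ hsurj (mem_univ z)
  obtain ⟨T', hT'_bij, hT'⟩ := Embedding.schroeder_bernstein_of_rel hi
    (LeftInverse.injective hTj) R hiR fun z ↦ .inl ⟨hjA z, (hTj z).symm⟩
  refine ⟨T', hT'_bij, hT.of_forall_eq_or_exists_isAnchor hM.le hξ.le hδ.le le_rfl hU hUU hT',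
    fun x hx ↦ ?_⟩
  rcases hT' x with ⟨-, h⟩ | ⟨a, ha, hxa⟩
  · rw [h, dist_self]
    exact hδ.le.trans hδM
  · rw [ha.eq_of_mem hx] at hxa
    exact (hU _ _ hxa).trans hδM

theorem exists_bijective_of_surjOn [CompleteSpace F] (hT : IsCoarseQuasiIsometryOn M 0 T A)
    (e : E ≃ F) (hM : 1 ≤ M) (hA : IsCoarselyDense ξE A) (hsurj : SurjOn T A univ) :
    ∃ T' : E → F, Bijective T' ∧ IsCoarseQuasiIsometryOn M (2 * M * ξE) T' univ ∧
      ∀ x ∈ A, dist (T' x) (T x) ≤ M * ξE := by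
  have hξE := hA.nonneg
  by_cases hA_univ : A = univ
  · subst hA_univ
    refine ⟨T, ⟨injOn_univ.1 (hT.injOn (by positivity)), surjOn_univ.1 hsurj⟩,
      hT.mono (by positivity), fun x _ ↦ ?_⟩
    rw [dist_self]
    positivity
  have hξE_pos : 0 < ξE := hξE.lt_of_ne' fun h ↦ hA_univ (IsCoarselyDense.eq_univ (h ▸ hA))
  have hM_lt : 1 < M := hM.lt_of_ne <| by
    rintro rfl
    refine hA_univ (hA.eq_univ_of_isometryOn (fun x hx y hy ↦ le_antisymm ?_ ?_) hsurj)
    · simpa using hT.dist_le x hx y hy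
    · simpa using hT.le_dist x hx y hy
  exact hT.exists_bijective_of_surjOn_of_one_lt e hM_lt hξE_pos hA hsurj

end IsCoarseQuasiIsometryOn

end Extension

theorem stmt_3_general {E : Type u} {F : Type v} [NormedAddCommGroup E] [NormedSpace ℝ E]
    [CompleteSpace E] [NormedAddCommGroup F] [NormedSpace ℝ F] [CompleteSpace F]
    {M L ξE ξF : ℝ} (hM : 0 < M) {A : Set E} (hA : IsCoarselyDense ξE A) {T : E → F}
    (hT : IsCoarseQuasiIsometryOn M L T A) (hTA : IsCoarselyDense ξF (T '' A)) :
    ∃ T' : E → F, Bijective T' ∧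
      IsCoarseQuasiIsometryOn M ((4 * M ^ 2 + 3) * L + 4 * ξF + 2 * M * ξE) T' univ ∧
      ∀ x ∈ A, dist (T' x) (T x) ≤ (2 * M ^ 2 + 2) * L + 2 * ξF + M * ξE := by
  have hL := hT.nonneg hA.nonempty
  have hξE := hA.nonneg
  have hξF := hTA.nonneg
  obtain ⟨e⟩ := hT.nonempty_equiv hM hA hTA
  rcases subsingleton_or_nontrivial E with hE | hE
  · have : Subsingleton F := e.symm.subsingleton
    have hE₀ (x y : E) : dist x y = 0 := by rw [Subsingleton.elim x y, dist_self]
    have hF₀ (z w : F) : dist z w = 0 := by rw [Subsingleton.elim z w, dist_self]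
    refine ⟨e, e.bijective, ⟨fun x _ y _ ↦ ?_, fun x _ y _ ↦ ?_⟩, fun x _ ↦ ?_⟩ <;>
      simp only [hE₀, hF₀, mul_zero, zero_sub, neg_nonpos, zero_add] <;> positivity
  have hM₁ : 1 ≤ M := hT.one_le hM hA
  rcases (add_nonneg hL hξF).lt_or_eq with hpos | hzero
  · obtain ⟨T', hT'_bij, hT', hdist⟩ := hT.exists_bijective_of_lt e hM₁ hA hTA
      (κ := (2 * M ^ 2 + 1) * L + 2 * ξF) (by nlinarith [one_le_pow₀ hM₁ (n := 2)])
    exact ⟨T', hT'_bij, hT'.mono (by linarith), fun x hx ↦ (hdist x hx).trans <| by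
      linarith [mul_nonneg hM.le hξE]⟩
  · obtain ⟨rfl, rfl⟩ : L = 0 ∧ ξF = 0 := ⟨by linarith, by linarith⟩
    have hsurj : SurjOn T A univ := fun z _ ↦ hTA.eq_univ ▸ mem_univ z
    simpa using hT.exists_bijective_of_surjOn e hM₁ hA hsurj

/-- Extension of a coarse `(M,L)`-quasi isometry between dense subsets of
infinite-dimensional Banach spaces to a bijective coarse quasi isometry of the whole spaces. -/
theorem stmt_3 {E F : Type} [NormedAddCommGroup E] [NormedSpace ℝ E] [CompleteSpace E]
    [NormedAddCommGroup F] [NormedSpace ℝ F] [CompleteSpace F]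
    (hE : ¬ FiniteDimensional ℝ E) (hF : ¬ FiniteDimensional ℝ F)
    (M L ξE ξF : ℝ) (hM : 0 < M) (hL : 0 ≤ L) (hξE : 0 ≤ ξE) (hξF : 0 ≤ ξF)
    (A : Set E) (hA : ∀ x : E, ∃ a ∈ A, ‖x - a‖ ≤ ξE)
    (T : E → F)
    (hTlow : ∀ x ∈ A, ∀ y ∈ A, (1 / M) * ‖x - y‖ - L ≤ ‖T x - T y‖)
    (hTup : ∀ x ∈ A, ∀ y ∈ A, ‖T x - T y‖ ≤ M * ‖x - y‖ + L)
    (hTdense : ∀ z : F, ∃ a ∈ A, ‖z - T a‖ ≤ ξF) :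
    ∃ T' : E → F, Function.Bijective T' ∧
      (∀ x y : E, (1 / M) * ‖x - y‖ - ((4 * M ^ 2 + 3) * L + 4 * ξF + 2 * M * ξE) ≤
        ‖T' x - T' y‖) ∧
      (∀ x y : E, ‖T' x - T' y‖ ≤ M * ‖x - y‖ + ((4 * M ^ 2 + 3) * L + 4 * ξF + 2 * M * ξE)) ∧
      ∀ x ∈ A, ‖T' x - T x‖ ≤ (2 * M ^ 2 + 2) * L + 2 * ξF + M * ξE := by
  simp only [← dist_eq_norm] at *
  obtain ⟨T', hT'_bij, hT', hdist⟩ := stmt_3_general hM hA ⟨hTlow, hTup⟩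
    (ξF := ξF) fun z ↦ by simpa only [exists_mem_image] using hTdense z
  exact ⟨T', hT'_bij, fun x y ↦ hT'.le_dist x trivial y trivial,
    fun x y ↦ hT'.dist_le x trivial y trivial, hdist⟩
end

section
/- Assume the coarse Banach-Stone setup with 1 − ε(M)M − ε(M) > 0, and let φ : X → Y be the map defined by {φ(x)} = S^D_m(x) for m > Mm₁ + L (well-defined and single-valued by the uniqueness fact), with inverse ψ : Y → X defined symmetrically. Then there exists m₂ ≥ 0 (m₂ = 0 when L = 0) such that for every f ∈ C(X) with ‖f‖ ≥ m₂ and every x ∈ X: |f(x)| − ε(M)M‖f‖ − (ε(M)+1)L ≤ |Tf(φ(x))| ≤ |f(x)| + ε(M)‖f‖ + L. -/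
open Filter Topology

/-- A bundled nonempty directed index set (for Moore–Smith nets). -/
structure DirIndex : Type 1 where
  ι : Type
  [pre : Preorder ι]
  [dir : IsDirected ι (· ≤ ·)]
  [ne : Nonempty ι]

attribute [instance] DirIndex.pre DirIndex.dir DirIndex.ne

/-- `f` is an `m`-peak net at `x`: `‖f σ‖ = |f σ x| = m` for all `σ`, and `f σ → 0`
uniformly on the complement of every open neighborhood of `x`. -/
def IsPeakNet {X : Type} [TopologicalSpace X] [CompactSpace X] (I : DirIndex)
    (f : I.ι → C(X, ℝ)) (m : ℝ) (x : X) : Prop :=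
  (∀ σ, ‖f σ‖ = m ∧ |f σ x| = m) ∧
  ∀ U : Set X, IsOpen U → x ∈ U →
    TendstoUniformlyOn (fun σ => ⇑(f σ)) 0 atTop Uᶜ

/-- The set `S^D_m(x) ⊆ Y`: limits `y` of nets `y_σ` such that some `m`-peak net `f_σ` at `x`
satisfies `T f_σ (y_σ) ≥ D m` and `T (-f_σ) (y_σ) ≤ -D m`. -/
def SD {X Y : Type} [TopologicalSpace X] [CompactSpace X] [TopologicalSpace Y]
    (T : C(X, ℝ) → C(Y, ℝ)) (D m : ℝ) (x : X) : Set Y :=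
  { y | ∃ (I : DirIndex) (f : I.ι → C(X, ℝ)) (yσ : I.ι → Y),
      IsPeakNet I f m x ∧ Tendsto yσ atTop (𝓝 y) ∧
      ∀ σ, D * m ≤ T (f σ) (yσ σ) ∧ T (-(f σ)) (yσ σ) ≤ -(D * m) }

/-!
Let `y ∈ S^D_m(x)` and `‖f‖ ≤ m`. Both `f_σ` and `-f_σ` stay within about `m + |f x|` of `f`, while
`T f_σ` and `T (-f_σ)` are far apart at `y_σ`; this pins `T f y` down to `|f x| + ε m + L`, where
`ε = 2 * M - 1 - D`. Applying this to a Urysohn function that vanishes at `x` and peaks at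
`x' ∈ S^D_{m'}(y)`, first for `T` and then for `T⁻¹`, forces `x' = x`. Since the sets `S^D_m` are
nonempty at large scales `m` (at all `m > 0` if `L = 0`), there `y ∈ S^D_m(x)` implies
`x ∈ S^D_{m'}(y)` as long as `m'` is at least `M * m + L` and at most slightly larger.
Iterating, `y` stays in `S^D_{m'}(x)` for arbitrarily large `m'`, so `y = φ x`. Both inequalities
are then instances of the one-sided estimate: for `T` at scale `‖f‖` and for `T⁻¹` at scale
`M * ‖f‖ + L`.
-/

open Set TopologicalSpace

section CoarseLipschitz

variable {E F : Type*} [SeminormedAddCommGroup E] [SeminormedAddCommGroup F] {M L : ℝ}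

/-- `T` is Lipschitz with constant `M` up to an additive error `L`: the upper half of a coarse
`(M, L)`-quasi-isometry. -/
def CoarseLipschitz (M L : ℝ) (T : E → F) : Prop :=
  ∀ f g, ‖T f - T g‖ ≤ M * ‖f - g‖ + L

/-- A bijection fixing the origin that is, like its inverse, a coarse `(M, L)`-quasi-isometry. The
lower bounds are not part of the structure, since each one follows from the upper bound for the
inverse; see `IsCoarseEquiv.norm_sub_le`. -/
structure IsCoarseEquiv (M L : ℝ) (e : E ≃ F) : Prop where
  map_zero : e 0 = 0
  coarseLipschitz : CoarseLipschitz M L e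
  coarseLipschitz_symm : CoarseLipschitz M L e.symm

theorem CoarseLipschitz.nonneg {T : E → F} (hT : CoarseLipschitz M L T) : 0 ≤ L := by
  simpa using (norm_nonneg _).trans (hT 0 0)

namespace IsCoarseEquiv

variable {e : E ≃ F}

theorem symm (he : IsCoarseEquiv M L e) : IsCoarseEquiv M L e.symm where
  map_zero := e.symm_apply_eq.2 he.map_zero.symm
  coarseLipschitz := he.coarseLipschitz_symm
  coarseLipschitz_symm := he.coarseLipschitz

theorem norm_apply_le (he : IsCoarseEquiv M L e) (f : E) : ‖e f‖ ≤ M * ‖f‖ + L := by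
  simpa [he.map_zero] using he.coarseLipschitz f 0

theorem norm_sub_le (he : IsCoarseEquiv M L e) (f g : E) : ‖f - g‖ ≤ M * ‖e f - e g‖ + L := by
  simpa using he.coarseLipschitz_symm (e f) (e g)

end IsCoarseEquiv

end CoarseLipschitz

section PeakFunctions

variable {X : Type} [TopologicalSpace X] [CompactSpace X] {m : ℝ} {x : X}

/-- `f` is an `m`-peak function at `x` supported in `U`: it has norm `m`, attains it at `x` up to
sign, and vanishes off `U`. Peak nets are built out of such functions. -/
structure IsPeakFunction (f : C(X, ℝ)) (m : ℝ) (x : X) (U : Set X) : Prop where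
  norm_eq : ‖f‖ = m
  abs_apply_eq : |f x| = m
  eqOn_compl : EqOn f 0 Uᶜ

theorem IsPeakFunction.neg {f : C(X, ℝ)} {U : Set X} (hf : IsPeakFunction f m x U) :
    IsPeakFunction (-f) m x U where
  norm_eq := by rw [norm_neg, hf.norm_eq]
  abs_apply_eq := by rw [ContinuousMap.neg_apply, abs_neg, hf.abs_apply_eq]
  eqOn_compl z hz := by simpa using hf.eqOn_compl hz

theorem exists_isPeakFunction [T2Space X] (hm : 0 ≤ m) {U : Set X} (hU : IsOpen U) (hx : x ∈ U) :
    ∃ f : C(X, ℝ), IsPeakFunction f m x U := by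
  obtain ⟨u, hu_zero, hu_one, hu_mem⟩ := exists_continuous_zero_one_of_isClosed
    hU.isClosed_compl (isClosed_singleton (x := x)) (disjoint_singleton_right.2 (not_not.2 hx))
  have hux : u x = 1 := hu_one rfl
  have hu_norm : ‖u‖ = 1 := by
    refine le_antisymm ((ContinuousMap.norm_le u zero_le_one).2 fun z => ?_) ?_
    · rw [Real.norm_of_nonneg (hu_mem z).1]
      exact (hu_mem z).2
    · simpa [hux] using u.norm_coe_le_norm x
  refine ⟨m • u, ?_, ?_, fun z hz => ?_⟩
  · rw [norm_smul, hu_norm, mul_one, Real.norm_of_nonneg hm]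
  · simp [hux, abs_of_nonneg hm]
  · simp [hu_zero hz]

theorem exists_abs_apply_eq_norm {f : C(X, ℝ)} (hf : f ≠ 0) : ∃ x, |f x| = ‖f‖ := by
  by_contra! hne
  have hlt : ∀ x, ‖f x‖ < ‖f‖ := fun x => (f.norm_coe_le_norm x).lt_of_ne (hne x)
  exact lt_irrefl _ ((ContinuousMap.norm_lt_iff f (norm_pos_iff.2 hf)).2 hlt)

namespace IsPeakNet

variable {I : DirIndex} {F : I.ι → C(X, ℝ)}

theorem neg (hF : IsPeakNet I F m x) : IsPeakNet I (fun σ => -F σ) m x := by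
  refine ⟨fun σ => by simpa using hF.1 σ, fun U hU hx => ?_⟩
  simpa [Metric.tendstoUniformlyOn_iff] using hF.2 U hU hx

theorem eventually_norm_sub_le (hF : IsPeakNet I F m x) {f : C(X, ℝ)} (hf : ‖f‖ ≤ m) {δ : ℝ}
    (hδ : 0 < δ) : ∀ᶠ σ in atTop, ‖F σ - f‖ ≤ m + |f x| + δ := by
  have hopen : IsOpen {z | |f z - f x| < δ} := isOpen_lt (by fun_prop) continuous_const
  have hsmall := Metric.tendstoUniformlyOn_iff.1 (hF.2 _ hopen (by simpa using hδ)) δ hδ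
  filter_upwards [hsmall] with σ hσ
  have hm : 0 ≤ m := (norm_nonneg f).trans hf
  refine (ContinuousMap.norm_le _ (by positivity)).2 fun z => ?_
  have hsub : ‖(F σ - f) z‖ ≤ |F σ z| + |f z| := norm_sub_le _ _
  have hFz : |F σ z| ≤ m := ((F σ).norm_coe_le_norm z).trans_eq (hF.1 σ).1
  have hfz : |f z| ≤ m := (f.norm_coe_le_norm z).trans hf
  by_cases hz : |f z - f x| < δ
  · linarith [abs_sub_abs_le_abs_sub (f z) (f x)]
  · have hFz_small : |F σ z| < δ := by simpa using hσ z hz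
    linarith [abs_nonneg (f x)]

end IsPeakNet

end PeakFunctions

section Estimates

variable {X Y : Type} [TopologicalSpace X] [CompactSpace X] [TopologicalSpace Y] [CompactSpace Y]
  {M L D m : ℝ} {T : C(X, ℝ) → C(Y, ℝ)} {x : X} {y : Y} {f : C(X, ℝ)}

theorem CoarseLipschitz.abs_apply_sub_apply_le (hT : CoarseLipschitz M L T) (hM : 0 ≤ M)
    {g : C(X, ℝ)} {r : ℝ} (hfg : ‖f - g‖ ≤ r) (y : Y) : |T f y - T g y| ≤ M * r + L :=
  calc |T f y - T g y| ≤ ‖T f - T g‖ := (T f - T g).norm_coe_le_norm y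
    _ ≤ M * ‖f - g‖ + L := hT f g
    _ ≤ M * r + L := by gcongr

theorem abs_apply_le_add_of_mem_SD (hM : 0 ≤ M) (hT : CoarseLipschitz M L T)
    (hy : y ∈ SD T D m x) (hf : ‖f‖ ≤ m) {δ : ℝ} (hδ : 0 < δ) :
    |T f y| ≤ M * (m + |f x| + δ) + L - D * m := by
  obtain ⟨I, F, yσ, hF, hlim, hsep⟩ := hy
  refine le_of_tendsto (((T f).continuous.abs.tendsto y).comp hlim) ?_
  filter_upwards [hF.eventually_norm_sub_le hf hδ, hF.neg.eventually_norm_sub_le hf hδ]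
    with σ hpos hneg
  have hpos_apply := abs_le.1 (hT.abs_apply_sub_apply_le hM hpos (yσ σ))
  have hneg_apply := abs_le.1 (hT.abs_apply_sub_apply_le hM hneg (yσ σ))
  obtain ⟨hlow, hupp⟩ := hsep σ
  exact abs_le.2 ⟨by linarith, by linarith⟩

theorem abs_apply_le_of_mem_SD (hM : 1 ≤ M) (hT : CoarseLipschitz M L T)
    (hy : y ∈ SD T D m x) (hf : ‖f‖ ≤ m) :
    |T f y| ≤ |f x| + (2 * M - 1 - D) * m + L := by
  have hM0 : 0 < M := one_pos.trans_le hM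
  have hlimit : |T f y| ≤ M * (m + |f x|) + L - D * m := by
    refine le_of_forall_pos_le_add fun η hη => ?_
    have hbound := abs_apply_le_add_of_mem_SD hM0.le hT hy hf (div_pos hη hM0)
    rw [mul_add, mul_div_cancel₀ η hM0.ne'] at hbound
    linarith
  have hfx : (M - 1) * |f x| ≤ (M - 1) * m :=
    mul_le_mul_of_nonneg_left ((f.norm_coe_le_norm x).trans hf) (sub_nonneg.2 hM)
  linarith

theorem IsCoarseEquiv.abs_apply_bounds_of_mem_SD {e : C(X, ℝ) ≃ C(Y, ℝ)}
    (he : IsCoarseEquiv M L e) (hM : 1 ≤ M) (hy : y ∈ SD e D ‖f‖ x)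
    (hx : x ∈ SD e.symm D (M * ‖f‖ + L) y) :
    |f x| - (2 * M - 1 - D) * M * ‖f‖ - ((2 * M - 1 - D) + 1) * L ≤ |e f y| ∧
      |e f y| ≤ |f x| + (2 * M - 1 - D) * ‖f‖ + L := by
  refine ⟨?_, abs_apply_le_of_mem_SD hM he.coarseLipschitz hy le_rfl⟩
  have hf := abs_apply_le_of_mem_SD hM he.coarseLipschitz_symm hx (he.norm_apply_le f)
  rw [e.symm_apply_apply] at hf
  linarith

end Estimates

section Nonempty

variable {X Y : Type} [TopologicalSpace X] [CompactSpace X] [TopologicalSpace Y]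
  {D m : ℝ} {x : X}

/-- The points of `Y` at which `T` separates `f` from `-f` as in the definition of `SD`, for some
`m`-peak function `f` at `x` supported in `U`. Limits of such points, as `U` shrinks to `x`, make up
the members of `SD T D m x` constructed here. -/
def peakPoints (T : C(X, ℝ) → C(Y, ℝ)) (D m : ℝ) (x : X) (U : Set X) : Set Y :=
  {y | ∃ f, IsPeakFunction f m x U ∧ D * m ≤ T f y ∧ T (-f) y ≤ -(D * m)}

theorem peakPoints_mono (T : C(X, ℝ) → C(Y, ℝ)) {U V : Set X} (hUV : U ⊆ V) :
    peakPoints T D m x U ⊆ peakPoints T D m x V :=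
  fun _ ⟨f, hf, hsep⟩ =>
    ⟨f, ⟨hf.norm_eq, hf.abs_apply_eq, hf.eqOn_compl.mono (compl_subset_compl.2 hUV)⟩, hsep⟩

theorem mem_SD_of_forall_mem_closure_peakPoints {T : C(X, ℝ) → C(Y, ℝ)} {y : Y}
    (hy : ∀ U : OpenNhdsOf x, y ∈ closure (peakPoints T D m x U)) : y ∈ SD T D m x := by
  have hpoint : ∀ p : (OpenNhdsOf x × OpenNhdsOf y)ᵒᵈ,
      ∃ z ∈ (p.ofDual.2 : Set Y), z ∈ peakPoints T D m x p.ofDual.1 := fun p =>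
    mem_closure_iff.1 (hy p.ofDual.1) _ p.ofDual.2.isOpen p.ofDual.2.mem
  choose z hzV f hf hsep using hpoint
  refine ⟨⟨(OpenNhdsOf x × OpenNhdsOf y)ᵒᵈ⟩, f, z,
    ⟨fun p => ⟨(hf p).norm_eq, (hf p).abs_apply_eq⟩, fun U hU hx => ?_⟩, ?_, hsep⟩
  · refine Metric.tendstoUniformlyOn_iff.2 fun δ hδ => ?_
    filter_upwards [eventually_ge_atTop (OrderDual.toDual
      ((⟨⟨U, hU⟩, hx⟩, ⊤) : OpenNhdsOf x × OpenNhdsOf y))] with p hp w hw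
    have hsub : (p.ofDual.1 : Set X) ⊆ U := hp.1
    simpa [(hf p).eqOn_compl (compl_subset_compl.2 hsub hw)] using hδ
  · refine tendsto_nhds.2 fun V hV hyV => ?_
    filter_upwards [eventually_ge_atTop (OrderDual.toDual
      ((⊤, ⟨⟨V, hV⟩, hyV⟩) : OpenNhdsOf x × OpenNhdsOf y))] with p hp
    have hsub : (p.ofDual.2 : Set Y) ⊆ V := hp.2
    exact hsub (hzV p)

theorem SD_nonempty_of_forall_peakPoints_nonempty [CompactSpace Y] {T : C(X, ℝ) → C(Y, ℝ)}
    (hT : ∀ U : OpenNhdsOf x, (peakPoints T D m x U).Nonempty) : (SD T D m x).Nonempty := by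
  have hdir : Directed (· ⊇ ·) fun U : OpenNhdsOf x => closure (peakPoints T D m x U) :=
    fun U V => ⟨U ⊓ V, closure_mono (peakPoints_mono T inter_subset_left),
      closure_mono (peakPoints_mono T inter_subset_right)⟩
  obtain ⟨y, hy⟩ := IsCompact.nonempty_iInter_of_directed_nonempty_isCompact_isClosed _ hdir
    (fun U => (hT U).closure) (fun _ => isClosed_closure.isCompact) (fun _ => isClosed_closure)
  exact ⟨y, mem_SD_of_forall_mem_closure_peakPoints (mem_iInter.1 hy)⟩

variable [CompactSpace Y] {M L : ℝ} {e : C(X, ℝ) ≃ C(Y, ℝ)}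

theorem IsCoarseEquiv.peakPoints_nonempty (he : IsCoarseEquiv M L e) (hM : 0 < M) (hm : 0 < m)
    (hscale : M * (D + M) * m + (M + 1) * L ≤ 2 * m) {U : Set X} {f : C(X, ℝ)}
    (hf : IsPeakFunction f m x U) : (peakPoints e D m x U).Nonempty := by
  have hnorm : ‖f - -f‖ = 2 * m := by
    rw [sub_neg_eq_add, ← two_smul ℝ f, norm_smul, hf.norm_eq, Real.norm_two]
  have hne : e f - e (-f) ≠ 0 := by
    refine sub_ne_zero.2 (e.injective.ne fun h => ?_)
    rw [sub_eq_zero.2 h, norm_zero] at hnorm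
    linarith
  obtain ⟨y, hy⟩ := exists_abs_apply_eq_norm hne
  have hbound : ∀ g : C(X, ℝ), ‖g‖ = m → |e g y| ≤ M * m + L := fun g hg =>
    ((e g).norm_coe_le_norm y).trans (hg ▸ he.norm_apply_le g)
  have hf_le := abs_le.1 (hbound f hf.norm_eq)
  have hneg_le := abs_le.1 (hbound (-f) hf.neg.norm_eq)
  have hgap : D * m + (M * m + L) ≤ |e f y - e (-f) y| := by
    have hlow := he.norm_sub_le f (-f)
    rw [hnorm, ← hy, ContinuousMap.sub_apply] at hlow
    exact le_of_mul_le_mul_left (by linarith) hM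
  rcases le_abs'.1 hgap with h | h
  · exact ⟨y, -f, hf.neg, by linarith, by rw [neg_neg]; linarith⟩
  · exact ⟨y, f, hf, by linarith, by linarith⟩

theorem IsCoarseEquiv.SD_nonempty [T2Space X] (he : IsCoarseEquiv M L e) (hM : 0 < M) (hm : 0 < m)
    (hscale : M * (D + M) * m + (M + 1) * L ≤ 2 * m) (x : X) : (SD e D m x).Nonempty := by
  refine SD_nonempty_of_forall_peakPoints_nonempty fun U => ?_
  obtain ⟨f, hf⟩ := exists_isPeakFunction hm.le U.isOpen U.mem
  exact he.peakPoints_nonempty hM hm hscale hf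

end Nonempty

section Margin

variable {M L D c m m' : ℝ}

/-- The strict inequalities `D < 2 / M - M` and `ε * M + ε < 1`, where `ε = 2 * M - 1 - D`, hold
with room `c` to spare: enough to absorb the additive constant `L` at every scale `m` with
`L ≤ c * m`, and to enlarge the ratio between consecutive scales from `M` to `M + c`. -/
structure IsMargin (M D c : ℝ) : Prop where
  pos : 0 < c
  nonempty : M * (D + M) + (M + 1) * c ≤ 2
  separated : (2 * M - 1 - D) * (1 + M + c) + 2 * c < 1

theorem exists_isMargin (hM : 0 < M) (hD : D < 2 / M - M)
    (hε : 0 < 1 - (2 * M - 1 - D) * M - (2 * M - 1 - D)) : ∃ c, IsMargin M D c := by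
  have hDM : M * (D + M) + (M + 1) * 0 < 2 := by
    have := (lt_div_iff₀ hM).1 (lt_sub_iff_add_lt.1 hD)
    linarith
  have hnonempty : ∀ᶠ c in 𝓝 (0 : ℝ), M * (D + M) + (M + 1) * c < 2 :=
    ContinuousAt.eventually_lt (by fun_prop) continuousAt_const hDM
  have hseparated : ∀ᶠ c in 𝓝 (0 : ℝ), (2 * M - 1 - D) * (1 + M + c) + 2 * c < 1 :=
    ContinuousAt.eventually_lt (by fun_prop) continuousAt_const (by linarith)
  obtain ⟨c, ⟨hc_nonempty, hc_separated⟩, hc_pos⟩ :=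
    (((hnonempty.and hseparated).filter_mono nhdsWithin_le_nhds).and
      (self_mem_nhdsWithin (s := Ioi (0 : ℝ)))).exists
  exact ⟨c, hc_pos, hc_nonempty.le, hc_separated⟩

namespace IsMargin

theorem nonempty_scale (hc : IsMargin M D c) (hM : 0 ≤ M) (hm : 0 ≤ m) (hL : L ≤ c * m) :
    M * (D + M) * m + (M + 1) * L ≤ 2 * m :=
  calc M * (D + M) * m + (M + 1) * L ≤ M * (D + M) * m + (M + 1) * (c * m) := by gcongr
    _ = (M * (D + M) + (M + 1) * c) * m := by ring
    _ ≤ 2 * m := by gcongr; exact hc.nonempty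

theorem error_nonneg (hc : IsMargin M D c) (hM : 1 ≤ M) : 0 ≤ 2 * M - 1 - D := by
  have := hc.nonempty
  nlinarith [hc.pos]

theorem separated_scale (hc : IsMargin M D c) (hM : 1 ≤ M) (hm : 0 < m) (hL : L ≤ c * m)
    (hm' : m' ≤ (M + c) * m) : (2 * M - 1 - D) * (m + m') + 2 * L < m := by
  have hε := hc.error_nonneg hM
  calc (2 * M - 1 - D) * (m + m') + 2 * L
      ≤ (2 * M - 1 - D) * (m + (M + c) * m) + 2 * (c * m) := by gcongr
    _ = ((2 * M - 1 - D) * (1 + M + c) + 2 * c) * m := by ring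
    _ < 1 * m := by gcongr; exact hc.separated
    _ = m := one_mul m

end IsMargin

end Margin

namespace IsCoarseEquiv

variable {X Y : Type} [TopologicalSpace X] [CompactSpace X] [T2Space X]
  [TopologicalSpace Y] [CompactSpace Y] {M L D c m m' : ℝ} {e : C(X, ℝ) ≃ C(Y, ℝ)} {x : X} {y : Y}

theorem eq_of_mem_SD_symm (he : IsCoarseEquiv M L e) (hM : 1 ≤ M) (hm : 0 ≤ m)
    (hmm' : M * m + L ≤ m') (hsep : (2 * M - 1 - D) * (m + m') + 2 * L < m)
    (hy : y ∈ SD e D m x) {x' : X} (hx' : x' ∈ SD e.symm D m' y) : x' = x := by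
  by_contra hne
  obtain ⟨f, hf⟩ := exists_isPeakFunction (U := {x}ᶜ) hm isOpen_compl_singleton hne
  have hfx : f x = 0 := hf.eqOn_compl (by simp)
  have hef_norm : ‖e f‖ ≤ m' := (he.norm_apply_le f).trans (hf.norm_eq.symm ▸ hmm')
  have hef := abs_apply_le_of_mem_SD hM he.coarseLipschitz hy hf.norm_eq.le
  have hf_back := abs_apply_le_of_mem_SD hM he.coarseLipschitz_symm hx' hef_norm
  rw [e.symm_apply_apply, hf.abs_apply_eq] at hf_back
  rw [hfx, abs_zero] at hef
  linarith

theorem mem_SD_symm_of_mem_SD [T2Space Y] (he : IsCoarseEquiv M L e) (hM : 1 ≤ M)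
    (hc : IsMargin M D c) (hm : 0 < m) (hL : L ≤ c * m) (hlow : M * m + L ≤ m')
    (hupp : m' ≤ (M + c) * m) (hy : y ∈ SD e D m x) : x ∈ SD e.symm D m' y := by
  have hM0 : 0 < M := one_pos.trans_le hM
  have hmm' : m ≤ m' := by nlinarith [he.coarseLipschitz.nonneg]
  have hm' : 0 < m' := hm.trans_le hmm'
  have hL' : L ≤ c * m' := hL.trans (mul_le_mul_of_nonneg_left hmm' hc.pos.le)
  obtain ⟨x', hx'⟩ := he.symm.SD_nonempty hM0 hm' (hc.nonempty_scale hM0.le hm'.le hL') y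
  rwa [← he.eq_of_mem_SD_symm hM hm.le hlow (hc.separated_scale hM hm hL hupp) hy hx']

theorem mem_SD_pow_mul_of_mem_SD [T2Space Y] (he : IsCoarseEquiv M L e) (hM : 1 ≤ M)
    (hc : IsMargin M D c) (hm : 0 < m) (hL : L ≤ c * m) (hy : y ∈ SD e D m x) (n : ℕ) :
    y ∈ SD e D (((M + c) ^ 2) ^ n * m) x := by
  have hK : 1 ≤ M + c := by linarith [hc.pos]
  have hstep : ∀ s, m ≤ s → M * s + L ≤ (M + c) * s := fun s hs => by
    linarith [mul_le_mul_of_nonneg_left hs hc.pos.le]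
  induction n with
  | zero => simpa using hy
  | succ n ih =>
    set s := ((M + c) ^ 2) ^ n * m
    have hms : m ≤ s := le_mul_of_one_le_left hm.le (one_le_pow₀ (one_le_pow₀ hK))
    have hs : 0 < s := hm.trans_le hms
    have hmKs : m ≤ (M + c) * s := hms.trans (le_mul_of_one_le_left hs.le hK)
    have hL_of_le : ∀ t, m ≤ t → L ≤ c * t := fun t ht =>
      hL.trans (mul_le_mul_of_nonneg_left ht hc.pos.le)
    have hx : x ∈ SD e.symm D ((M + c) * s) y :=
      he.mem_SD_symm_of_mem_SD hM hc hs (hL_of_le s hms) (hstep s hms) le_rfl ih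
    have hy' : y ∈ SD e D ((M + c) * ((M + c) * s)) x :=
      he.symm.mem_SD_symm_of_mem_SD hM hc (hm.trans_le hmKs) (hL_of_le _ hmKs) (hstep _ hmKs)
        le_rfl hx
    rwa [← mul_assoc, ← sq, ← mul_assoc, ← pow_succ'] at hy'

theorem mem_SD_of_forall_SD_eq_singleton [T2Space Y] (he : IsCoarseEquiv M L e) (hM : 1 ≤ M)
    (hc : IsMargin M D c) (hm : 0 < m) (hL : L ≤ c * m) {R : ℝ}
    (hR : ∀ s, R < s → SD e D s x = {y}) : y ∈ SD e D m x := by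
  have hM0 : 0 < M := one_pos.trans_le hM
  obtain ⟨z, hz⟩ := he.SD_nonempty hM0 hm (hc.nonempty_scale hM0.le hm.le hL) x
  have hK : 1 < (M + c) ^ 2 := one_lt_pow₀ (by linarith [hc.pos]) two_ne_zero
  obtain ⟨n, hn⟩ := pow_unbounded_of_one_lt (R / m) hK
  have hz_large := he.mem_SD_pow_mul_of_mem_SD hM hc hm hL hz n
  rw [hR _ ((div_lt_iff₀ hm).1 hn), mem_singleton_iff] at hz_large
  rwa [← hz_large]

end IsCoarseEquiv

theorem stmt_10_general {X Y : Type} [TopologicalSpace X] [CompactSpace X] [T2Space X]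
    [TopologicalSpace Y] [CompactSpace Y] [T2Space Y] {M L D R : ℝ} (hM : 1 ≤ M)
    (hD : D < 2 / M - M) (hε : 0 < 1 - (2 * M - 1 - D) * M - (2 * M - 1 - D))
    {e : C(X, ℝ) ≃ C(Y, ℝ)} (he : IsCoarseEquiv M L e) {φ : X → Y}
    (hφ : ∀ m : ℝ, R < m → ∀ x : X, SD e D m x = {φ x}) :
    ∃ m₂ : ℝ, 0 ≤ m₂ ∧ (L = 0 → m₂ = 0) ∧
      ∀ f : C(X, ℝ), m₂ ≤ ‖f‖ → ∀ x : X,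
        |f x| - (2 * M - 1 - D) * M * ‖f‖ - ((2 * M - 1 - D) + 1) * L ≤ |e f (φ x)| ∧
        |e f (φ x)| ≤ |f x| + (2 * M - 1 - D) * ‖f‖ + L := by
  obtain ⟨c, hc⟩ := exists_isMargin (one_pos.trans_le hM) hD hε
  refine ⟨L / c, div_nonneg he.coarseLipschitz.nonneg hc.pos.le, fun hL => by simp [hL],
    fun f hf x => ?_⟩
  have hL : L ≤ c * ‖f‖ := (div_le_iff₀' hc.pos).1 hf
  rcases eq_or_ne f 0 with rfl | hf_ne
  · have hL_zero : L = 0 := le_antisymm (by simpa using hL) he.coarseLipschitz.nonneg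
    simp [he.map_zero, hL_zero]
  have hf_pos : 0 < ‖f‖ := norm_pos_iff.2 hf_ne
  have hφx : φ x ∈ SD e D ‖f‖ x :=
    he.mem_SD_of_forall_SD_eq_singleton hM hc hf_pos hL fun s hs => hφ s hs x
  exact he.abs_apply_bounds_of_mem_SD hM hφx
    (he.mem_SD_symm_of_mem_SD hM hc hf_pos hL le_rfl (by linarith) hφx)

/-- The two-sided estimate for `|Tf(φ(x))|`, where `ε(M) = 2M - 1 - D`. -/
theorem stmt_10 {X Y : Type} [TopologicalSpace X] [CompactSpace X] [T2Space X]
    [TopologicalSpace Y] [CompactSpace Y] [T2Space Y]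
    (M L D : ℝ) (hM1 : 1 ≤ M) (hM2 : M < Real.sqrt 2) (hL : 0 ≤ L)
    (hD0 : 0 < D) (hD : D < 2 / M - M)
    (T : C(X, ℝ) → C(Y, ℝ)) (T' : C(Y, ℝ) → C(X, ℝ))
    (hbij : Function.Bijective T) (h0 : T 0 = 0)
    (hinv₁ : Function.LeftInverse T' T) (hinv₂ : Function.RightInverse T' T)
    (hTlow : ∀ f g : C(X, ℝ), (1 / M) * ‖f - g‖ - L ≤ ‖T f - T g‖)
    (hTup : ∀ f g : C(X, ℝ), ‖T f - T g‖ ≤ M * ‖f - g‖ + L)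
    (hT'low : ∀ f g : C(Y, ℝ), (1 / M) * ‖f - g‖ - L ≤ ‖T' f - T' g‖)
    (hT'up : ∀ f g : C(Y, ℝ), ‖T' f - T' g‖ ≤ M * ‖f - g‖ + L)
    (hε : 0 < 1 - (2 * M - 1 - D) * M - (2 * M - 1 - D))
    (m₁ : ℝ) (hm₁ : 0 ≤ m₁)
    (φ : X → Y) (ψ : Y → X)
    (hφ : ∀ m : ℝ, M * m₁ + L < m → ∀ x : X, SD T D m x = {φ x})
    (hψ : ∀ m : ℝ, M * m₁ + L < m → ∀ y : Y, SD T' D m y = {ψ y})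
    (hφψ : Function.LeftInverse ψ φ) (hψφ : Function.RightInverse ψ φ) :
    ∃ m₂ : ℝ, 0 ≤ m₂ ∧ (L = 0 → m₂ = 0) ∧
      ∀ f : C(X, ℝ), m₂ ≤ ‖f‖ → ∀ x : X,
        |f x| - (2 * M - 1 - D) * M * ‖f‖ - ((2 * M - 1 - D) + 1) * L ≤ |T f (φ x)| ∧
        |T f (φ x)| ≤ |f x| + (2 * M - 1 - D) * ‖f‖ + L := by
  exact stmt_10_general (e := ⟨T, T', hinv₁, hinv₂⟩) hM1 hD hε ⟨h0, hTup, hT'up⟩ hφ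
end

section
/- If X and Y are compact Hausdorff spaces with d_N(C(X), C(Y)) < 6/5, then X and Y are homeomorphic. -/
/-- `N` is an `(ε, δ)`-net in the metric space `E`: it is `ε`-dense and `δ`-separated. -/
def IsNetIn {E : Type} [MetricSpace E] (N : Set E) (ε δ : ℝ) : Prop :=
  (∀ x : E, ∃ n ∈ N, dist x n ≤ ε) ∧ ∀ a ∈ N, ∀ b ∈ N, a ≠ b → δ ≤ dist a b

/-- The set of products `l(T) * l(T⁻¹)` over bi-Lipschitz bijections `T` between nets of `E`
and `F`. -/
def netDistSet (E F : Type) [MetricSpace E] [MetricSpace F] : Set ℝ :=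
  { c | ∃ (NE : Set E) (NF : Set F) (ε₁ δ₁ ε₂ δ₂ : ℝ), 0 < ε₁ ∧ 0 < δ₁ ∧ 0 < ε₂ ∧ 0 < δ₂ ∧
      IsNetIn NE ε₁ δ₁ ∧ IsNetIn NF ε₂ δ₂ ∧
      ∃ (T : NE → NF) (K K' : ℝ), Function.Bijective T ∧ 0 < K ∧ 0 < K' ∧
        (∀ a b : NE, dist (T a : F) (T b : F) ≤ K * dist (a : E) (b : E)) ∧
        (∀ a b : NE, dist (a : E) (b : E) ≤ K' * dist (T a : F) (T b : F)) ∧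
        c = K * K' }

/-- The net distance between Banach spaces `E` and `F`. -/
noncomputable def netDist (E F : Type) [MetricSpace E] [MetricSpace F] : ℝ :=
  sInf (netDistSet E F)

/-!
A bi-Lipschitz bijection between nets extends to maps `U : C(X) → C(Y)` and `V : C(Y) → C(X)` that
are Lipschitz with constants `K` and `K'` up to an additive error and mutually inverse up to a
bounded error. Fix a large radius `r`. Any finitely many functions of the `r`-ball peaking at `x`
lie within about `r` of a single function `F` with `F x ≥ 2 * r`, and `U F`, `U (-F)` are far apart;
so compactness of `Y` yields a point `y` at which `U f` and `U (-g)` differ by at least `σ * r` for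
all `f`, `g` peaking at `x`, provided `K' * σ < 4 - 2 * K * K'`. If `x' ≠ x` corresponded in the
same way to `y` through `V`, with slope `σ'`, a function peaking at `x` and vanishing at `x'` would
give a contradiction as soon as `K' * (2 * K - σ) < K * σ'`. With `σ = t / K'` and `σ' = t / K` all
the conditions follow from `K * K' < t < 4 - 2 * K * K'`, which is solvable when `K * K' < 4 / 3`.
-/

open Filter
open scoped NNReal

section CoarseEquiv

variable {α β γ : Type*} [PseudoMetricSpace α] [PseudoMetricSpace β] [PseudoMetricSpace γ]

/-- The map `f` is Lipschitz for large distances: it satisfies the Lipschitz inequality with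
constant `K` up to the additive error `L`. -/
def CoarseLipschitzWith (K L : ℝ≥0) (f : α → β) : Prop :=
  ∀ x y, dist (f x) (f y) ≤ K * dist x y + L

theorem CoarseLipschitzWith.mono {K L L' : ℝ≥0} {f : α → β} (hf : CoarseLipschitzWith K L f)
    (hL : L ≤ L') : CoarseLipschitzWith K L' f := fun x y =>
  (hf x y).trans (by gcongr)

theorem CoarseLipschitzWith.comp {K₁ L₁ K₂ L₂ : ℝ≥0} {g : β → γ} {f : α → β}
    (hg : CoarseLipschitzWith K₂ L₂ g) (hf : CoarseLipschitzWith K₁ L₁ f) :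
    CoarseLipschitzWith (K₂ * K₁) (K₂ * L₁ + L₂) (g ∘ f) := fun x y =>
  calc dist (g (f x)) (g (f y)) ≤ K₂ * dist (f x) (f y) + L₂ := hg _ _
    _ ≤ K₂ * (K₁ * dist x y + L₁) + L₂ := by gcongr; exact hf x y
    _ = (K₂ * K₁ : ℝ≥0) * dist x y + (K₂ * L₁ + L₂ : ℝ≥0) := by push_cast; ring

theorem CoarseLipschitzWith.dist_apply_le {K L : ℝ≥0} {f : α → β} (hf : CoarseLipschitzWith K L f)
    {a b : α} {c : β} {δ η : ℝ} (hab : dist a b ≤ δ) (hc : dist (f b) c ≤ η) :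
    dist (f a) c ≤ K * δ + L + η :=
  calc dist (f a) c ≤ dist (f a) (f b) + dist (f b) c := dist_triangle _ _ _
    _ ≤ (K * dist a b + L) + η := add_le_add (hf a b) hc
    _ ≤ K * δ + L + η := by gcongr

/-- The maps `U` and `V` form a coarse Lipschitz equivalence (a quasi-isometry): they are Lipschitz
for large distances, with constants `K` and `K'`, and mutually inverse up to a bounded error. A
single constant `L` bounds all additive errors. -/
structure IsCoarseEquivWith (K K' L : ℝ≥0) (U : α → β) (V : β → α) : Prop where
  coarseLipschitz : CoarseLipschitzWith K L U
  coarseLipschitz_inv : CoarseLipschitzWith K' L V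
  dist_left_inv_le : ∀ x, dist (V (U x)) x ≤ L
  dist_right_inv_le : ∀ y, dist (U (V y)) y ≤ L

namespace IsCoarseEquivWith

variable {K K' L : ℝ≥0} {U : α → β} {V : β → α}

theorem symm (h : IsCoarseEquivWith K K' L U V) : IsCoarseEquivWith K' K L V U :=
  ⟨h.coarseLipschitz_inv, h.coarseLipschitz, h.dist_right_inv_le, h.dist_left_inv_le⟩

theorem trans {K₂ K₂' L₂ : ℝ≥0} {U₂ : β → γ} {V₂ : γ → β}
    (h : IsCoarseEquivWith K K' L U V) (h₂ : IsCoarseEquivWith K₂ K₂' L₂ U₂ V₂) :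
    IsCoarseEquivWith (K₂ * K) (K' * K₂') ((K₂ + 2) * L + (K' + 2) * L₂) (U₂ ∘ U) (V ∘ V₂) where
  coarseLipschitz := (h₂.coarseLipschitz.comp h.coarseLipschitz).mono (by
    rw [← NNReal.coe_le_coe]
    push_cast
    nlinarith [L.coe_nonneg, L₂.coe_nonneg, mul_nonneg K'.coe_nonneg L₂.coe_nonneg])
  coarseLipschitz_inv := (h.coarseLipschitz_inv.comp h₂.coarseLipschitz_inv).mono (by
    rw [← NNReal.coe_le_coe]
    push_cast
    nlinarith [L.coe_nonneg, L₂.coe_nonneg, mul_nonneg K₂.coe_nonneg L.coe_nonneg])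
  dist_left_inv_le x := by
    have := h.coarseLipschitz_inv.dist_apply_le (h₂.dist_left_inv_le (U x)) (h.dist_left_inv_le x)
    refine this.trans ?_
    push_cast
    nlinarith [L₂.coe_nonneg, mul_nonneg K₂.coe_nonneg L.coe_nonneg]
  dist_right_inv_le z := by
    have := h₂.coarseLipschitz.dist_apply_le (h.dist_right_inv_le (V₂ z)) (h₂.dist_right_inv_le z)
    refine this.trans ?_
    push_cast
    nlinarith [L.coe_nonneg, mul_nonneg K'.coe_nonneg L₂.coe_nonneg]

theorem dist_le (h : IsCoarseEquivWith K K' L U V) (x y : α) :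
    dist x y ≤ K' * dist (U x) (U y) + 3 * L := by
  have hx := h.dist_left_inv_le x
  rw [dist_comm] at hx
  linarith [dist_triangle4 x (V (U x)) (V (U y)) y, h.dist_left_inv_le y,
    h.coarseLipschitz_inv (U x) (U y)]

end IsCoarseEquivWith

theorem exists_isCoarseEquivWith_subtype_val {N : Set α} {ε : ℝ≥0}
    (hN : ∀ x, ∃ n ∈ N, dist x n ≤ ε) :
    ∃ p : α → N, IsCoarseEquivWith 1 1 (2 * ε) p Subtype.val := by
  choose p hpN hp using hN
  have hp' (x : α) : dist (p x) x ≤ ε := dist_comm x (p x) ▸ hp x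
  refine ⟨fun x => ⟨p x, hpN x⟩, fun x y => ?_, fun x y => ?_, fun x => ?_, fun x => ?_⟩
  all_goals simp only [Subtype.dist_eq]; push_cast
  · linarith [dist_triangle4 (p x) x y (p y), hp' x, hp y]
  · linarith [ε.coe_nonneg]
  · linarith [hp' x, ε.coe_nonneg]
  · linarith [hp' x, ε.coe_nonneg]

end CoarseEquiv

theorem exists_isCoarseEquivWith_of_mem_netDistSet {E F : Type} [MetricSpace E] [MetricSpace F]
    {c : ℝ} (hc : c ∈ netDistSet E F) :
    ∃ (K K' L : ℝ≥0) (U : E → F) (V : F → E),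
      0 < K ∧ 0 < K' ∧ (K * K' : ℝ) = c ∧ IsCoarseEquivWith K K' L U V := by
  obtain ⟨NE, NF, ε₁, -, ε₂, -, hε₁, -, hε₂, -, ⟨hE, -⟩, ⟨hF, -⟩, T, K, K', hT, hK, hK', hTK, hTK',
    rfl⟩ := hc
  lift ε₁ to ℝ≥0 using hε₁.le
  lift ε₂ to ℝ≥0 using hε₂.le
  lift K to ℝ≥0 using hK.le
  lift K' to ℝ≥0 using hK'.le
  obtain ⟨p, hp⟩ := exists_isCoarseEquivWith_subtype_val hE
  obtain ⟨q, hq⟩ := exists_isCoarseEquivWith_subtype_val hF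
  let e : NE ≃ NF := Equiv.ofBijective T hT
  have he : IsCoarseEquivWith K K' 0 e e.symm :=
    { coarseLipschitz := fun a b => by simpa [e, Subtype.dist_eq] using hTK a b
      coarseLipschitz_inv := fun a b => by
        simpa [e, Subtype.dist_eq, Equiv.ofBijective_apply_symm_apply]
          using hTK' (e.symm a) (e.symm b)
      dist_left_inv_le := fun a => by simp
      dist_right_inv_le := fun b => by simp }
  have hUV := (hp.trans he).trans hq.symm
  rw [mul_one, one_mul, mul_one, one_mul] at hUV
  exact ⟨K, K', _, _, _, hK, hK', rfl, hUV⟩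

theorem CoarseLipschitzWith.norm_le {E F : Type*} [SeminormedAddCommGroup E]
    [SeminormedAddCommGroup F] {K L : ℝ≥0} {U : E → F} (hU : CoarseLipschitzWith K L U) (f : E) :
    ‖U f‖ ≤ K * ‖f‖ + (L + ‖U 0‖) := by
  have hdist := hU f 0
  rw [dist_eq_norm, dist_zero_right] at hdist
  linarith [norm_le_norm_add_norm_sub' (U f) (U 0)]

theorem nonempty_homeomorph_of_isClosed_relation {X Y : Type*} [TopologicalSpace X]
    [CompactSpace X] [TopologicalSpace Y] [CompactSpace Y] [T2Space Y]
    {A C : X → Set Y} {B : Y → Set X} (hA : ∀ x, (A x).Nonempty) (hB : ∀ y, (B y).Nonempty)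
    (hC : ∀ x, (C x).Nonempty) (hclosed : IsClosed {p : X × Y | p.2 ∈ A p.1})
    (hAB : ∀ x x' y, y ∈ A x → x' ∈ B y → x' = x)
    (hBC : ∀ y y' x, x ∈ B y → y' ∈ C x → y' = y) : Nonempty (X ≃ₜ Y) := by
  choose φ hφ using hA
  choose ψ hψ using hB
  choose χ hχ using hC
  have hψ_eq {x : X} {y : Y} (hy : y ∈ A x) : ψ y = x := hAB x _ y hy (hψ y)
  have hχψ (y : Y) : χ (ψ y) = y := hBC y _ _ (hψ y) (hχ _)
  have hA_eq {x : X} {y : Y} (hy : y ∈ A x) : y = φ x := by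
    rw [← hχψ y, ← hχψ (φ x), hψ_eq hy, hψ_eq (hφ x)]
  let e : X ≃ Y :=
    { toFun := φ
      invFun := ψ
      left_inv := fun x => hψ_eq (hφ x)
      right_inv := fun y => by rw [← hχψ (φ (ψ y)), hψ_eq (hφ (ψ y)), hχψ] }
  have hcont : Continuous e := by
    refine continuous_iff_isClosed.2 fun S hS => ?_
    have hpre : e ⁻¹' S = Prod.fst '' ({p : X × Y | p.2 ∈ A p.1} ∩ Prod.snd ⁻¹' S) := by
      ext x
      constructor
      · exact fun hx => ⟨(x, φ x), ⟨hφ x, hx⟩, rfl⟩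
      · rintro ⟨⟨x, y⟩, ⟨hy, hyS⟩, rfl⟩
        exact (hA_eq hy ▸ hyS : φ x ∈ S)
    rw [hpre]
    exact isClosedMap_fst_of_compactSpace _ (hclosed.inter (hS.preimage continuous_snd))
  exact ⟨hcont.homeoOfEquivCompactToT2⟩

theorem eventually_mul_add_lt_mul_add {a b : ℝ} (hab : a < b) (c d : ℝ) :
    ∀ᶠ r : ℝ in atTop, a * r + c < b * r + d := by
  filter_upwards [eventually_gt_atTop ((c - d) / (b - a))] with r hr
  rw [div_lt_iff₀ (sub_pos.2 hab)] at hr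
  linarith

section PeakSet

variable {X Y : Type*} [TopologicalSpace X] [CompactSpace X] [TopologicalSpace Y]

/-- The continuous functions in the ball of radius `r` that almost attain the value `r` at `x`.
The strict inequality makes this an open condition on `x`. -/
def peakFunctions (r : ℝ) (x : X) : Set C(X, ℝ) :=
  {f | ‖f‖ ≤ r ∧ r - 1 < f x}

/-- The points of `Y` corresponding to `x` under `U` at scale `r`: those at which `U` separates by
at least `σ * r` every function peaking at `x` from the negative of every such function. -/
def peakSet (U : C(X, ℝ) → C(Y, ℝ)) (σ r : ℝ) (x : X) : Set Y :=
  {y | ∀ f ∈ peakFunctions r x, ∀ g ∈ peakFunctions r x, σ * r ≤ dist (U f y) (U (-g) y)}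

theorem isClosed_setOf_mem_peakSet (U : C(X, ℝ) → C(Y, ℝ)) (σ r : ℝ) :
    IsClosed {p : X × Y | p.2 ∈ peakSet U σ r p.1} := by
  have hopen (f : C(X, ℝ)) : IsOpen {p : X × Y | f ∈ peakFunctions r p.1} :=
    isOpen_const.and (isOpen_lt continuous_const (by fun_prop))
  have hset : {p : X × Y | p.2 ∈ peakSet U σ r p.1} = ⋂ (f : C(X, ℝ)) (g : C(X, ℝ)),
      {p | f ∈ peakFunctions r p.1 → g ∈ peakFunctions r p.1 →
        σ * r ≤ dist (U f p.2) (U (-g) p.2)} := by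
    ext p
    simp only [peakSet, Set.mem_ofPred_eq, Set.mem_iInter]
    exact ⟨fun h f g hf hg => h f hf g hg, fun h f hf g hg => h f g hf hg⟩
  rw [hset]
  exact isClosed_iInter fun f => isClosed_iInter fun g => isClosed_imp (hopen f) <|
    isClosed_imp (hopen g) <| isClosed_le continuous_const (by fun_prop)

theorem exists_forall_dist_le_of_forall_mem_peakFunctions {r : ℝ} (hr : 0 ≤ r) {x : X}
    {S : Finset C(X, ℝ)} (hS : ∀ f ∈ S, f ∈ peakFunctions r x) :
    ∃ F : C(X, ℝ), 2 * r ≤ F x ∧ ∀ f ∈ S, dist F f ≤ r + 1 := by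
  classical
  have hconst : ContinuousMap.const X r ∈ peakFunctions r x :=
    ⟨(ContinuousMap.norm_le _ hr).2 fun z => by simp [abs_of_nonneg hr], by simp⟩
  have hS' : ∀ f ∈ insert (ContinuousMap.const X r) S, f ∈ peakFunctions r x :=
    Finset.forall_mem_insert _ _ _ |>.2 ⟨hconst, hS⟩
  let F : C(X, ℝ) := (insert (ContinuousMap.const X r) S).inf' (Finset.insert_nonempty _ _)
    fun f => f + ContinuousMap.const X (r + 1)
  refine ⟨F, ?_, fun f hf => (ContinuousMap.dist_le (by linarith)).2 fun z => ?_⟩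
  · rw [ContinuousMap.inf'_apply]
    refine Finset.le_inf' _ _ fun f hf => ?_
    simp only [ContinuousMap.add_apply, ContinuousMap.const_apply]
    linarith [(hS' f hf).2]
  · have habs {g : C(X, ℝ)} (hg : g ∈ peakFunctions r x) : |g z| ≤ r :=
      (g.norm_coe_le_norm z).trans hg.1
    have hupper : F z ≤ f z + (r + 1) := by
      rw [ContinuousMap.inf'_apply]
      exact Finset.inf'_le _ (Finset.mem_insert_of_mem hf)
    have hlower : 0 ≤ F z := by
      rw [ContinuousMap.inf'_apply]
      refine Finset.le_inf' _ _ fun g hg => ?_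
      simp only [ContinuousMap.add_apply, ContinuousMap.const_apply]
      linarith [(abs_le.1 (habs (hS' g hg))).1]
    rw [Real.dist_eq, abs_le]
    constructor <;> linarith [(abs_le.1 (habs (hS f hf))).2]

theorem exists_mem_peakFunctions_dist_le {f : C(X, ℝ)} {r : ℝ} (hf : ‖f‖ ≤ r) (x : X) :
    ∃ p ∈ peakFunctions r x, dist p f ≤ r - f x := by
  have hr : 0 ≤ r := (norm_nonneg f).trans hf
  have hbound (z : X) : -r ≤ f z ∧ f z ≤ r := abs_le.1 ((f.norm_coe_le_norm z).trans hf)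
  let p : C(X, ℝ) := (f + ContinuousMap.const X (r - f x)) ⊓ ContinuousMap.const X r
  have hp (z : X) : p z = min (f z + (r - f x)) r := rfl
  have hle (z : X) : f z ≤ p z := by
    rw [hp]
    exact le_min (by linarith [hbound x]) (hbound z).2
  refine ⟨p, ⟨(ContinuousMap.norm_le _ hr).2 fun z => ?_, by simp [hp]⟩,
    (ContinuousMap.dist_le (by linarith [hbound x])).2 fun z => ?_⟩
  · exact abs_le.2 ⟨(hbound z).1.trans (hle z), min_le_right _ _⟩
  · rw [Real.dist_eq, abs_of_nonneg (sub_nonneg.2 (hle z)), hp]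
    linarith [min_le_left (f z + (r - f x)) r]

theorem exists_mem_peakFunctions_apply_eq_zero [T2Space X] {r : ℝ} (hr : 0 ≤ r) {x x' : X}
    (hne : x' ≠ x) : ∃ f ∈ peakFunctions r x, f x' = 0 := by
  obtain ⟨b, hb₀, hb₁, hb⟩ := exists_continuous_zero_one_of_isClosed
    (isClosed_singleton (x := x')) (isClosed_singleton (x := x)) (by simpa using hne)
  have hbx : b x = 1 := hb₁ rfl
  refine ⟨r • b, ⟨(ContinuousMap.norm_le _ hr).2 fun z => ?_, ?_⟩, ?_⟩
  · rw [ContinuousMap.smul_apply, smul_eq_mul, Real.norm_eq_abs,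
      abs_of_nonneg (mul_nonneg hr (hb z).1)]
    exact mul_le_of_le_one_right hr (hb z).2
  · simp [hbx]
  · simp [show b x' = 0 from hb₀ rfl]

variable [CompactSpace Y]

theorem CoarseLipschitzWith.le_dist_apply_of_mem_peakSet {K L : ℝ≥0} {U : C(X, ℝ) → C(Y, ℝ)}
    (hU : CoarseLipschitzWith K L U) {σ r : ℝ} {x : X} {y : Y} (hy : y ∈ peakSet U σ r x)
    {f g : C(X, ℝ)} (hf : ‖f‖ ≤ r) (hg : ‖g‖ ≤ r) :
    σ * r ≤ dist (U f y) (U g y) + K * (2 * r - dist (f x) (g x)) + 2 * L := by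
  wlog hgf : g x ≤ f x generalizing f g
  · simpa only [dist_comm] using this hg hf (le_of_not_ge hgf)
  obtain ⟨p, hp, hpf⟩ := exists_mem_peakFunctions_dist_le hf x
  obtain ⟨q, hq, hqg⟩ := exists_mem_peakFunctions_dist_le ((norm_neg g).trans_le hg) x
  rw [← dist_neg_neg, neg_neg, dist_comm] at hqg
  calc σ * r ≤ dist (U p y) (U (-q) y) := hy p hp q hq
    _ ≤ dist (U p y) (U f y) + dist (U f y) (U g y) + dist (U g y) (U (-q) y) :=
      dist_triangle4 _ _ _ _
    _ ≤ (K * dist p f + L) + dist (U f y) (U g y) + (K * dist g (-q) + L) := by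
      gcongr
      · exact (ContinuousMap.dist_apply_le_dist y).trans (hU p f)
      · exact (ContinuousMap.dist_apply_le_dist y).trans (hU g (-q))
    _ ≤ (K * (r - f x) + L) + dist (U f y) (U g y) + (K * (r - (-g) x) + L) := by gcongr
    _ = dist (U f y) (U g y) + K * (2 * r - dist (f x) (g x)) + 2 * L := by
      rw [Real.dist_eq (f x), abs_of_nonneg (sub_nonneg.2 hgf), ContinuousMap.neg_apply]
      ring

namespace IsCoarseEquivWith

variable {K K' L : ℝ≥0} {U : C(X, ℝ) → C(Y, ℝ)} {V : C(Y, ℝ) → C(X, ℝ)}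

theorem exists_forall_mem_finset_le_dist_apply (h : IsCoarseEquivWith K K' L U V) {σ r : ℝ}
    (hσ : 0 ≤ σ) (hr : 0 ≤ r) (hgap : K' * (2 * (K * (r + 1) + L) + σ * r) + 3 * L < 4 * r) {x : X}
    {S : Finset C(X, ℝ)} (hS : ∀ f ∈ S, f ∈ peakFunctions r x) :
    ∃ y, ∀ f ∈ S, ∀ g ∈ S, σ * r ≤ dist (U f y) (U (-g) y) := by
  obtain ⟨F, hFx, hFS⟩ := exists_forall_dist_le_of_forall_mem_peakFunctions hr hS
  have hdist : 4 * r ≤ dist F (-F) :=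
    calc 4 * r ≤ F x - (-F) x := by rw [ContinuousMap.neg_apply]; linarith
      _ ≤ dist (F x) ((-F) x) := le_abs_self _
      _ ≤ dist F (-F) := ContinuousMap.dist_apply_le_dist x
  obtain ⟨y, hy⟩ : ∃ y, 2 * (K * (r + 1) + L) + σ * r < dist (U F y) (U (-F) y) := by
    by_contra! hle
    have hUF := (ContinuousMap.dist_le (by positivity)).2 hle
    have := mul_le_mul_of_nonneg_left hUF K'.coe_nonneg
    linarith [h.dist_le F (-F)]
  have hnear {f g : C(X, ℝ)} (hfg : dist f g ≤ r + 1) :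
      dist (U f y) (U g y) ≤ K * (r + 1) + L :=
    calc dist (U f y) (U g y) ≤ dist (U f) (U g) := ContinuousMap.dist_apply_le_dist y
      _ ≤ K * dist f g + L := h.coarseLipschitz f g
      _ ≤ K * (r + 1) + L := by gcongr
  refine ⟨y, fun f hf g hg => ?_⟩
  have hFf := hnear (hFS f hf)
  have hgF := hnear (f := -g) (g := -F) (by rw [dist_neg_neg, dist_comm]; exact hFS g hg)
  linarith [dist_triangle4 (U F y) (U f y) (U (-g) y) (U (-F) y)]

theorem peakSet_nonempty (h : IsCoarseEquivWith K K' L U V) {σ r : ℝ} (hσ : 0 ≤ σ) (hr : 0 ≤ r)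
    (hgap : K' * (2 * (K * (r + 1) + L) + σ * r) + 3 * L < 4 * r) (x : X) :
    (peakSet U σ r x).Nonempty := by
  classical
  obtain ⟨y, -, hy⟩ := isCompact_univ.inter_iInter_nonempty
    (fun p : peakFunctions r x × peakFunctions r x =>
      {y : Y | σ * r ≤ dist (U p.1 y) (U (-p.2) y)})
    (fun p => isClosed_le continuous_const (by fun_prop)) fun u => by
      let S : Finset C(X, ℝ) := u.image (fun p => p.1.1) ∪ u.image (fun p => p.2.1)
      have hS : ∀ f ∈ S, f ∈ peakFunctions r x := by
        simp only [S, Finset.mem_union, Finset.mem_image]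
        rintro _ (⟨p, -, rfl⟩ | ⟨p, -, rfl⟩)
        exacts [p.1.2, p.2.2]
      obtain ⟨y, hy⟩ := h.exists_forall_mem_finset_le_dist_apply hσ hr hgap hS
      exact ⟨y, Set.mem_univ y, Set.mem_iInter₂.2 fun p hp => hy _
        (Finset.mem_union_left _ (Finset.mem_image_of_mem _ hp)) _
        (Finset.mem_union_right _ (Finset.mem_image_of_mem _ hp))⟩
  exact ⟨y, fun f hf g hg => Set.mem_iInter.1 hy (⟨f, hf⟩, ⟨g, hg⟩)⟩

theorem eventually_peakSet_nonempty (h : IsCoarseEquivWith K K' L U V) {σ : ℝ} (hσ : 0 ≤ σ)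
    (hgap : K' * σ < 4 - 2 * (K * K')) :
    ∀ᶠ r in atTop, ∀ x, (peakSet U σ r x).Nonempty := by
  have hslope : K' * σ + 2 * (K * K') < 4 := by linarith
  filter_upwards [eventually_ge_atTop 0,
    eventually_mul_add_lt_mul_add hslope (K' * (2 * (K + L)) + 3 * L) 0] with r hr hlt
  exact h.peakSet_nonempty hσ hr (by linarith)

theorem eq_of_mem_peakSet [T2Space X] (h : IsCoarseEquivWith K K' L U V) {σ σ' r s : ℝ}
    (hr : 0 ≤ r) (hUs : ∀ f, ‖f‖ ≤ r → ‖U f‖ ≤ s)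
    (hgap : K' * (2 * s - σ * r) + 4 * L < σ' * s) {x x' : X} {y : Y}
    (hy : y ∈ peakSet U σ r x) (hx' : x' ∈ peakSet V σ' s y) : x' = x := by
  by_contra hne
  obtain ⟨f, hf, hfx'⟩ := exists_mem_peakFunctions_apply_eq_zero hr hne
  have hVx' : dist (V (U f) x') (V (U (-f)) x') ≤ 2 * L :=
    calc dist (V (U f) x') (V (U (-f)) x')
        ≤ dist (V (U f) x') (f x') + dist (V (U (-f)) x') ((-f) x') := by
          rw [ContinuousMap.neg_apply, hfx', neg_zero]; exact dist_triangle_right _ _ _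
      _ ≤ L + L := add_le_add
          ((ContinuousMap.dist_apply_le_dist x').trans (h.dist_left_inv_le f))
          ((ContinuousMap.dist_apply_le_dist x').trans (h.dist_left_inv_le (-f)))
      _ = 2 * L := (two_mul _).symm
  have hV := h.coarseLipschitz_inv.le_dist_apply_of_mem_peakSet hx' (hUs f hf.1)
    (hUs (-f) ((norm_neg f).trans_le hf.1))
  have hU := mul_le_mul_of_nonneg_left (hy f hf f hf) K'.coe_nonneg
  linarith

theorem eventually_eq_of_mem_peakSet [T2Space X] (h : IsCoarseEquivWith K K' L U V) {σ σ' : ℝ}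
    (hgap : K' * (2 * K - σ) < K * σ') :
    ∀ᶠ r in atTop, ∀ x x' y, y ∈ peakSet U σ r x →
      x' ∈ peakSet V σ' (K * r + (L + ‖U 0‖)) y → x' = x := by
  filter_upwards [eventually_ge_atTop 0, eventually_mul_add_lt_mul_add hgap
    (K' * (2 * (L + ‖U 0‖)) + 4 * L) (σ' * (L + ‖U 0‖))] with r hr hlt x x' y
  refine h.eq_of_mem_peakSet hr (fun f hf => ?_) (by linarith)
  exact (h.coarseLipschitz.norm_le f).trans (by gcongr)

theorem nonempty_homeomorph [T2Space X] [T2Space Y] (h : IsCoarseEquivWith K K' L U V)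
    (hK : 0 < K) (hK' : 0 < K') (hKK' : (K * K' : ℝ) < 4 / 3) : Nonempty (X ≃ₜ Y) := by
  rw [← NNReal.coe_pos] at hK hK'
  obtain ⟨t, hKt, ht⟩ : ∃ t : ℝ, K * K' < t ∧ t < 4 - 2 * (K * K') :=
    exists_between (by linarith)
  have ht₀ : 0 < t := (mul_pos hK hK').trans hKt
  have hσ : K' * (t / K') = t := mul_div_cancel₀ t hK'.ne'
  have hσ' : K * (t / K) = t := mul_div_cancel₀ t hK.ne'
  have hnonempty := h.eventually_peakSet_nonempty (σ := t / K') (by positivity) (by linarith)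
  have hnonempty' := h.symm.eventually_peakSet_nonempty (σ := t / K) (by positivity) (by linarith)
  have hUV := h.eventually_eq_of_mem_peakSet (σ := t / K') (σ' := t / K) (by linarith)
  have hVU := h.symm.eventually_eq_of_mem_peakSet (σ := t / K) (σ' := t / K') (by linarith)
  have hs : Tendsto (fun r : ℝ => K * r + (L + ‖U 0‖)) atTop atTop :=
    tendsto_atTop_add_const_right _ _ (tendsto_id.const_mul_atTop hK)
  have hs' : Tendsto (fun s : ℝ => K' * s + (L + ‖V 0‖)) atTop atTop :=
    tendsto_atTop_add_const_right _ _ (tendsto_id.const_mul_atTop hK')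
  obtain ⟨r, hA, hB, hC, hAB, hBC⟩ := (hnonempty.and <| (hs.eventually hnonempty').and <|
    ((hs'.comp hs).eventually hnonempty).and <| hUV.and <| hs.eventually hVU).exists
  exact nonempty_homeomorph_of_isClosed_relation hA hB hC (isClosed_setOf_mem_peakSet U _ r) hAB hBC

end IsCoarseEquivWith

end PeakSet

theorem stmt_13_general {X Y : Type} [TopologicalSpace X] [CompactSpace X] [T2Space X]
    [TopologicalSpace Y] [CompactSpace Y] [T2Space Y]
    (hne : (netDistSet C(X, ℝ) C(Y, ℝ)).Nonempty)
    (hd : netDist C(X, ℝ) C(Y, ℝ) < 4 / 3) :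
    Nonempty (X ≃ₜ Y) := by
  obtain ⟨c, hc, hlt⟩ := exists_lt_of_csInf_lt hne hd
  obtain ⟨K, K', L, U, V, hK, hK', rfl, h⟩ := exists_isCoarseEquivWith_of_mem_netDistSet hc
  exact h.nonempty_homeomorph hK hK' hlt

/-- If `d_N(C(X), C(Y)) < 6/5` for compact Hausdorff spaces `X` and `Y`, then `X` and `Y` are
homeomorphic. -/
theorem stmt_13 {X Y : Type} [TopologicalSpace X] [CompactSpace X] [T2Space X]
    [TopologicalSpace Y] [CompactSpace Y] [T2Space Y]
    (hne : (netDistSet C(X, ℝ) C(Y, ℝ)).Nonempty)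
    (hd : netDist C(X, ℝ) C(Y, ℝ) < 6 / 5) :
    Nonempty (X ≃ₜ Y) :=
  stmt_13_general hne (hd.trans (by norm_num))
end
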